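/- arXiv:1609.03340 — 3 statements merged into one kernel-verified Lean document; each statement's English description precedes it below -/
import Mathlib

section
/- Let μ be a probability measure on ℝ with finite first moment and T a closed subset of ℝ with supp(μ) ⊆ [inf T, sup T]. Let ν = μP_T be the image of μ under the Kellerer dilation P_T. Then the hitting coupling π = μ(id × P_T) is the unique martingale coupling of μ and ν, i.e. M(μ, ν) = {π}. -/
open MeasureTheory
open scoped Classical

/-- The support of a measure on a topological space. -/
def msupport {α : Type*} [TopologicalSpace α] [MeasurableSpace α] (μ : Measure α) : Set α :=
  {x | ∀ U : Set α, IsOpen U → x ∈ U → 0 < μ U}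

/-- The Kellerer dilation onto a closed set `T`: the point mass at `x` if `x ∈ T`, and
otherwise the two-point martingale measure on the nearest points of `T` below and above `x`. -/

noncomputable def kellererDilation (T : Set ℝ) (x : ℝ) : Measure ℝ :=
  if x ∈ T then Measure.dirac x
  else
    ENNReal.ofReal ((sInf (T ∩ Set.Ici x) - x) / (sInf (T ∩ Set.Ici x) - sSup (T ∩ Set.Iic x))) •
        Measure.dirac (sSup (T ∩ Set.Iic x)) +
      ENNReal.ofReal ((x - sSup (T ∩ Set.Iic x)) / (sInf (T ∩ Set.Ici x) - sSup (T ∩ Set.Iic x))) •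
        Measure.dirac (sInf (T ∩ Set.Ici x))

/-- A martingale coupling of `μ` and `ν`: a measure on `ℝ × ℝ` with marginals `μ, ν`
such that `E[Y | X] = X`, expressed by `∫ (y - x) f(x) dπ = 0` for all bounded measurable `f`. -/
def IsMartingaleCoupling (π : Measure (ℝ × ℝ)) (μ ν : Measure ℝ) : Prop :=
  π.map Prod.fst = μ ∧ π.map Prod.snd = ν ∧
    ∀ f : ℝ → ℝ, Measurable f → (∀ x, |f x| ≤ 1) →
      ∫ p, (p.2 - p.1) * f p.1 ∂π = 0

/-- The hitting coupling `μ(id × P_T)`. -/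
noncomputable def hittingCoupling (T : Set ℝ) (μ : Measure ℝ) : Measure (ℝ × ℝ) :=
  μ.bind fun x => (kellererDilation T x).map fun y => (x, y)
open ProbabilityTheory Filter Topology

namespace KD

/-! ### The strictly convex test function -/

noncomputable def phi (y : ℝ) : ℝ := √(1 + y ^ 2)

lemma phi_pos (y : ℝ) : 0 < phi y := Real.sqrt_pos.2 (by positivity)

lemma phi_sq (y : ℝ) : phi y ^ 2 = 1 + y ^ 2 := Real.sq_sqrt (by positivity)

lemma abs_le_phi (y : ℝ) : |y| ≤ phi y := by
  apply Real.le_sqrt_of_sq_le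
  rw [sq_abs]; linarith

lemma phi_le (y : ℝ) : phi y ≤ 1 + |y| := by
  apply Real.sqrt_le_iff.2
  refine ⟨by positivity, ?_⟩
  nlinarith [abs_nonneg y, sq_abs y]

lemma phi_measurable : Measurable phi := by
  unfold phi; fun_prop

/-- chord slope -/
noncomputable def slo (l u : ℝ) : ℝ := (u + l) / (phi u + phi l)

lemma slo_abs_le (l u : ℝ) : |slo l u| ≤ 1 := by
  unfold slo
  rw [abs_div, abs_of_pos (add_pos (phi_pos u) (phi_pos l)),
    div_le_one (add_pos (phi_pos u) (phi_pos l))]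
  exact (abs_add_le _ _).trans (add_le_add (abs_le_phi _) (abs_le_phi _))

lemma slo_spec (l u : ℝ) : slo l u * (u - l) = phi u - phi l := by
  have := add_pos (phi_pos u) (phi_pos l)
  unfold slo
  field_simp
  nlinarith [phi_sq u, phi_sq l]

lemma chord_pos {l u y : ℝ} (hlu : l ≤ u) (hy : y < l ∨ u < y) :
    0 < phi y - phi l - slo l u * (y - l) := by
  have hpos := add_pos (phi_pos u) (phi_pos l)
  have e : ∀ y, phi y = Real.cosh (Real.arsinh y) := fun y => (Real.cosh_arsinh y).symm
  have key : 0 < (phi y - phi l) * (phi u + phi l) - (u + l) * (y - l) := by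
    have hy' : Real.arsinh y < Real.arsinh l ∨ Real.arsinh u < Real.arsinh y := by
      simpa using hy
    have hlu' : Real.arsinh l ≤ Real.arsinh u := by simpa using hlu
    rw [e, e, e]
    rw [← Real.sinh_arsinh y, ← Real.sinh_arsinh l, ← Real.sinh_arsinh u]
    simp only [Real.arsinh_sinh]
    generalize Real.arsinh y = a at *
    generalize Real.arsinh l = b at *
    generalize Real.arsinh u = c at *
    have h1 : Real.cosh (b - c) ≤ Real.cosh (a - c) ∨ Real.cosh (b - c) ≤ Real.cosh (a - b) := by
      simp only [Real.cosh_le_cosh]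
      rcases hy' with h | h
      · left
        rw [abs_of_nonpos (by linarith), abs_of_nonpos (by linarith)]; linarith
      · right
        rw [abs_of_nonpos (by linarith), abs_of_nonneg (by linarith)]; linarith
    have h2 : 1 < Real.cosh (a - b) := by
      rw [Real.one_lt_cosh]; rcases hy' with h | h <;> intro h' <;> linarith
    have h3 : 1 < Real.cosh (a - c) := by
      rw [Real.one_lt_cosh]; rcases hy' with h | h <;> intro h' <;> linarith
    have h4 := Real.cosh_sq b
    rw [Real.cosh_sub] at *
    rw [Real.cosh_sub, Real.cosh_sub] at *
    rcases h1 with h1 | h1 <;> nlinarith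
  have : phi y - phi l - slo l u * (y - l)
      = ((phi y - phi l) * (phi u + phi l) - (u + l) * (y - l)) / (phi u + phi l) := by
    unfold slo; field_simp
  rw [this]
  exact div_pos key hpos

/-! ### The kernel attached to a pair of functions -/

/-- admissible pairs: either trivial or strictly around `x` -/
def Adm (l u : ℝ → ℝ) : Prop := ∀ x, (l x < x ∧ x < u x) ∨ (l x = x ∧ u x = x)

noncomputable def wt (l u : ℝ → ℝ) (x : ℝ) : ℝ :=
  if l x < u x then (u x - x) / (u x - l x) else 1

noncomputable def ker0 (l u : ℝ → ℝ) (x : ℝ) : Measure ℝ :=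
  ENNReal.ofReal (wt l u x) • Measure.dirac (l x) +
    ENNReal.ofReal (1 - wt l u x) • Measure.dirac (u x)

variable {l u : ℝ → ℝ}

lemma wt_measurable (hl : Measurable l) (hu : Measurable u) : Measurable (wt l u) := by
  unfold wt
  exact Measurable.ite (measurableSet_lt hl hu) (by fun_prop) (by fun_prop)

lemma wt_mem (h : Adm l u) (x : ℝ) : 0 ≤ wt l u x ∧ 0 ≤ 1 - wt l u x := by
  unfold wt
  rcases h x with ⟨h1, h2⟩ | ⟨h1, h2⟩
  · rw [if_pos (h1.trans h2)]
    have : 0 < u x - l x := by linarith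
    refine ⟨div_nonneg (by linarith) this.le, ?_⟩
    rw [sub_nonneg, div_le_one this]; linarith
  · simp [h1, h2]

/-- the weights have mean `x` -/
lemma wt_mean (h : Adm l u) (x : ℝ) : wt l u x * l x + (1 - wt l u x) * u x = x := by
  unfold wt
  rcases h x with ⟨h1, h2⟩ | ⟨h1, h2⟩
  · rw [if_pos (h1.trans h2)]
    have : u x - l x ≠ 0 := by linarith
    field_simp
    ring
  · simp [h1, h2]

lemma ker0_measurable (hl : Measurable l) (hu : Measurable u) : Measurable (ker0 l u) := by
  refine Measure.measurable_of_measurable_coe _ fun s hs => ?_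
  have hw := wt_measurable hl hu
  simp only [ker0, Measure.add_apply, Measure.smul_apply, smul_eq_mul, Measure.dirac_apply' _ hs]
  have hi : Measurable (s.indicator (1 : ℝ → ENNReal)) := measurable_one.indicator hs
  exact ((hw.ennreal_ofReal).mul (hi.comp hl)).add
    (((measurable_const.sub hw).ennreal_ofReal).mul (hi.comp hu))

noncomputable def ker (l u : ℝ → ℝ) (hl : Measurable l) (hu : Measurable u) : Kernel ℝ ℝ :=
  ⟨ker0 l u, ker0_measurable hl hu⟩

lemma ker_markov (hl : Measurable l) (hu : Measurable u) (h : Adm l u) :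
    IsMarkovKernel (ker l u hl hu) := by
  refine ⟨fun x => ⟨?_⟩⟩
  have := wt_mem h x
  change ker0 l u x Set.univ = 1
  simp [ker0]
  rw [← ENNReal.ofReal_add this.1 this.2]; simp

lemma ker_integrable (f : ℝ → ℝ) (x : ℝ) : Integrable f (ker0 l u x) := by
  refine Integrable.add_measure ?_ ?_ <;>
  exact (integrable_dirac (by simp)).smul_measure (by simp)

lemma ker_integral (h : Adm l u) (f : ℝ → ℝ) (x : ℝ) :
    ∫ y, f y ∂(ker0 l u x) = wt l u x * f (l x) + (1 - wt l u x) * f (u x) := by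
  have := wt_mem h x
  unfold ker0
  rw [integral_add_measure ((integrable_dirac (by simp)).smul_measure (by simp))
    ((integrable_dirac (by simp)).smul_measure (by simp)), integral_smul_measure,
    integral_smul_measure, integral_dirac, integral_dirac, ENNReal.toReal_ofReal this.1,
    ENNReal.toReal_ofReal this.2]
  simp

/-- kernel integral as affine interpolation -/
lemma ker_interp (h : Adm l u) (f : ℝ → ℝ) (s x : ℝ) (hs : s * (u x - l x) = f (u x) - f (l x)) :
    ∫ y, f y ∂(ker0 l u x) = f (l x) + s * (x - l x) := by
  rw [ker_integral h]
  have := wt_mean h x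
  linear_combination s * this - (1 - wt l u x) * hs

/-! ### Martingale couplings -/

/-- extension of the martingale property to unbounded test functions -/
lemma mart_ext {π : Measure (ℝ × ℝ)}
    (hm : ∀ f : ℝ → ℝ, Measurable f → (∀ x, |f x| ≤ 1) → ∫ p, (p.2 - p.1) * f p.1 ∂π = 0)
    {f : ℝ → ℝ} (hf : Measurable f) (hi : Integrable (fun p : ℝ × ℝ => (p.2 - p.1) * f p.1) π) :
    ∫ p, (p.2 - p.1) * f p.1 ∂π = 0 := by
  let F : ℕ → ℝ → ℝ := fun n x => if |f x| ≤ n then f x else 0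
  have hF : ∀ n, Measurable (F n) := fun n =>
    Measurable.ite (measurableSet_le (by fun_prop) (by fun_prop)) hf (by fun_prop)
  have h0 : ∀ n : ℕ, ∫ p, (p.2 - p.1) * F n p.1 ∂π = 0 := by
    intro n
    have hn : (0 : ℝ) < n + 1 := by positivity
    have := hm (fun x => F n x / (n + 1)) ((hF n).div_const _) (by
      intro x
      rw [abs_div, abs_of_pos hn, div_le_one hn]
      simp only [F]
      split_ifs with hx
      · linarith
      · simp; positivity)
    simp only [← mul_div_assoc] at this
    rw [integral_div] at this
    rcases div_eq_zero_iff.1 this with h | h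
    · exact h
    · linarith
  have hlim := tendsto_integral_of_dominated_convergence (μ := π)
    (F := fun n p => (p.2 - p.1) * F n p.1) (f := fun p => (p.2 - p.1) * f p.1)
    (fun p => ‖(p.2 - p.1) * f p.1‖)
    (fun n => by
      have := hF n
      exact Measurable.aestronglyMeasurable (by fun_prop)) hi.norm
    (fun n => ae_of_all _ fun p => by
      simp only [F]
      split_ifs
      · exact le_rfl
      · simp; positivity)
    (ae_of_all _ fun p => by
      apply tendsto_const_nhds.congr'
      obtain ⟨N, hN⟩ := exists_nat_ge |f p.1|
      filter_upwards [eventually_ge_atTop N] with n hn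
      simp only [F]
      rw [if_pos (hN.trans (by exact_mod_cast hn))])
  simp only [h0] at hlim
  exact tendsto_nhds_unique hlim tendsto_const_nhds |>.symm ▸ rfl

end KD

namespace KD

variable {l u : ℝ → ℝ}

lemma snd_integrable (μ : Measure ℝ) [IsProbabilityMeasure μ]
    (hμ : Integrable (fun x : ℝ => x) μ) (hl : Measurable l) (hu : Measurable u) (h : Adm l u)
    (t : ℝ) (ht : ∀ᵐ x ∂μ, t ≤ l x ∨ u x ≤ t) :
    Integrable (fun p : ℝ × ℝ => p.2) (μ ⊗ₘ ker l u hl hu) := by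
  have := ker_markov hl hu h
  have key : Integrable (fun p : ℝ × ℝ => p.2 - t) (μ ⊗ₘ ker l u hl hu) := by
    rw [Measure.integrable_compProd_iff (Measurable.aestronglyMeasurable (by fun_prop))]
    refine ⟨ae_of_all _ fun x => ker_integrable _ x, ?_⟩
    refine (hμ.sub (integrable_const t)).norm.congr ?_
    filter_upwards [ht] with x hx
    change _ = ∫ y, ‖y - t‖ ∂(ker0 l u x)
    rw [ker_integral h]
    have hm := wt_mean h x
    have hlx : l x ≤ x ∧ x ≤ u x := by
      rcases h x with h | h <;> constructor <;> linarith
    simp only [Real.norm_eq_abs, Pi.sub_apply]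
    rcases hx with hx | hx
    · rw [abs_of_nonneg (by linarith), abs_of_nonneg (by linarith), abs_of_nonneg (by linarith)]
      linarith
    · rw [abs_of_nonpos (by linarith), abs_of_nonpos (by linarith), abs_of_nonpos (by linarith)]
      linarith
  exact (key.add (integrable_const t)).congr (ae_of_all _ fun p => by simp)

lemma hit_fst (μ : Measure ℝ) [IsProbabilityMeasure μ]
    (hl : Measurable l) (hu : Measurable u) (h : Adm l u) :
    (μ ⊗ₘ ker l u hl hu).map Prod.fst = μ := by
  have := ker_markov hl hu h
  exact Measure.fst_compProd μ _

lemma hit_snd (μ : Measure ℝ) [IsProbabilityMeasure μ]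
    (hl : Measurable l) (hu : Measurable u) (h : Adm l u) :
    (μ ⊗ₘ ker l u hl hu).map Prod.snd = μ.bind (ker0 l u) := by
  have := ker_markov hl hu h
  exact Measure.snd_compProd μ _

lemma int_fst {π : Measure (ℝ × ℝ)} {μ : Measure ℝ} (h : π.map Prod.fst = μ) {f : ℝ → ℝ}
    (hf : Integrable f μ) : Integrable (fun p : ℝ × ℝ => f p.1) π := by
  subst h
  exact (integrable_map_measure hf.1 (by fun_prop)).1 hf

lemma int_snd {π : Measure (ℝ × ℝ)} {μ : Measure ℝ} (h : π.map Prod.snd = μ) {f : ℝ → ℝ}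
    (hf : Integrable f μ) : Integrable (fun p : ℝ × ℝ => f p.2) π := by
  subst h
  exact (integrable_map_measure hf.1 (by fun_prop)).1 hf

lemma integral_fst' {π : Measure (ℝ × ℝ)} {μ : Measure ℝ} (h : π.map Prod.fst = μ) {f : ℝ → ℝ}
    (hf : AEStronglyMeasurable f μ) : ∫ p, f p.1 ∂π = ∫ x, f x ∂μ := by
  subst h
  exact (integral_map (by fun_prop) hf).symm

lemma integral_snd' {π : Measure (ℝ × ℝ)} {μ : Measure ℝ} (h : π.map Prod.snd = μ) {f : ℝ → ℝ}
    (hf : AEStronglyMeasurable f μ) : ∫ p, f p.2 ∂π = ∫ x, f x ∂μ := by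
  subst h
  exact (integral_map (by fun_prop) hf).symm

lemma hit_isMC (μ : Measure ℝ) [IsProbabilityMeasure μ]
    (hμ : Integrable (fun x : ℝ => x) μ) (hl : Measurable l) (hu : Measurable u) (h : Adm l u)
    (t : ℝ) (ht : ∀ᵐ x ∂μ, t ≤ l x ∨ u x ≤ t) :
    IsMartingaleCoupling (μ ⊗ₘ ker l u hl hu) μ (μ.bind (ker0 l u)) := by
  have := ker_markov hl hu h
  refine ⟨hit_fst μ hl hu h, hit_snd μ hl hu h, fun f hf hf1 => ?_⟩
  have hi : Integrable (fun p : ℝ × ℝ => (p.2 - p.1) * f p.1) (μ ⊗ₘ ker l u hl hu) := by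
    have := (snd_integrable μ hμ hl hu h t ht).sub (int_fst (hit_fst μ hl hu h) hμ)
    exact this.mul_bdd (c := 1) (Measurable.aestronglyMeasurable (by fun_prop))
      (ae_of_all _ fun p => hf1 _)
  rw [Measure.integral_compProd hi]
  apply integral_eq_zero_of_ae
  refine ae_of_all _ fun x => ?_
  change ∫ y, (y - x) * f x ∂(ker0 l u x) = 0
  rw [ker_integral h]
  linear_combination f x * wt_mean h x

lemma bind_ae (μ : Measure ℝ) (hl : Measurable l) (hu : Measurable u)
    {T : Set ℝ} (hT : MeasurableSet T) (hG : ∀ᵐ x ∂μ, l x ∈ T ∧ u x ∈ T) :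
    ∀ᵐ y ∂(μ.bind (ker0 l u)), y ∈ T := by
  rw [ae_iff]
  change μ.bind (ker0 l u) Tᶜ = 0
  rw [Measure.bind_apply hT.compl (ker0_measurable hl hu).aemeasurable]
  refine (lintegral_eq_zero_iff' (f := fun x => ker0 l u x Tᶜ)
    ((Measure.measurable_coe hT.compl).comp (ker0_measurable hl hu)).aemeasurable).2 ?_
  filter_upwards [hG] with x hx
  simp [ker0, hx.1, hx.2]

/-- Any martingale coupling is carried by the two graphs. -/
lemma mc_support (μ : Measure ℝ) [IsProbabilityMeasure μ]
    (hμ : Integrable (fun x : ℝ => x) μ) (hl : Measurable l) (hu : Measurable u) (h : Adm l u)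
    {T : Set ℝ} (hT : MeasurableSet T)
    (hG : ∀ᵐ x ∂μ, l x ∈ T ∧ u x ∈ T ∧ ∀ y ∈ T, y ≤ l x ∨ u x ≤ y)
    (t : ℝ) (ht : t ∈ T) (π : Measure (ℝ × ℝ))
    (hπ : IsMartingaleCoupling π μ (μ.bind (ker0 l u))) :
    ∀ᵐ p ∂π, p.2 = l p.1 ∨ p.2 = u p.1 := by
  have := ker_markov hl hu h
  obtain ⟨h1, h2, h3⟩ := hπ
  have ht' : ∀ᵐ x ∂μ, t ≤ l x ∨ u x ≤ t := hG.mono fun x hx => hx.2.2 t ht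
  have hsnd := snd_integrable μ hμ hl hu h t ht'
  have hid : Integrable (fun y : ℝ => y) (μ.bind (ker0 l u)) := by
    rw [← hit_snd μ hl hu h]
    exact (integrable_map_measure (Measurable.aestronglyMeasurable (by fun_prop))
      (by fun_prop)).2 hsnd
  have hprob : IsProbabilityMeasure (μ.bind (ker0 l u)) := by
    rw [← hit_snd μ hl hu h]
    exact Measure.isProbabilityMeasure_map (by fun_prop)
  have hphi : Integrable phi (μ.bind (ker0 l u)) := by
    refine ((integrable_const (1 : ℝ)).add hid.norm).mono' phi_measurable.aestronglyMeasurable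
      (ae_of_all _ fun y => ?_)
    rw [Real.norm_eq_abs, abs_of_pos (phi_pos y)]
    exact phi_le y
  have hphi2 := int_snd (hit_snd μ hl hu h) hphi
  let c : ℝ → ℝ := fun x => ∫ y, phi y ∂(ker0 l u x)
  have hc : Integrable c μ := 
    MeasureTheory.Integrable.integral_compProd (κ := Kernel.const Unit μ)
      (η := Kernel.prodMkLeft Unit (ker l u hl hu)) (a := ()) hphi2
  have hc' : ∀ x, c x = phi (l x) + slo (l x) (u x) * (x - l x) := fun x =>
    ker_interp h phi _ x (slo_spec _ _)
  have hcint : ∫ y, phi y ∂(μ.bind (ker0 l u)) = ∫ x, c x ∂μ := by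
    rw [← integral_snd' (hit_snd μ hl hu h) hphi.1, Measure.integral_compProd hphi2]
    rfl
  have hsm : Measurable fun x => slo (l x) (u x) := by
    have := phi_measurable
    unfold slo
    fun_prop
  have hd : Integrable (fun p : ℝ × ℝ => (p.2 - p.1) * slo (l p.1) (u p.1)) π :=
    ((int_snd h2 hid).sub (int_fst h1 hμ)).mul_bdd (c := 1)
      (hsm.comp measurable_fst).aestronglyMeasurable
      (ae_of_all _ fun p => slo_abs_le _ _)
  have hd0 := h3 _ hsm (fun x => slo_abs_le _ _)
  let G : ℝ × ℝ → ℝ := fun p => phi p.2 - c p.1 - (p.2 - p.1) * slo (l p.1) (u p.1)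
  have hGi : Integrable G π := ((int_snd h2 hphi).sub (int_fst h1 hc)).sub hd
  have hG0 : ∫ p, G p ∂π = 0 := by
    have e1 := integral_sub ((int_snd h2 hphi).sub (int_fst h1 hc)) hd
    have e2 := integral_sub (int_snd h2 hphi) (int_fst h1 hc)
    simp only [Pi.sub_apply] at e1
    change ∫ p, phi p.2 - c p.1 - (p.2 - p.1) * slo (l p.1) (u p.1) ∂π = 0
    rw [e1, e2, hd0, integral_snd' h2 hphi.1, integral_fst' h1 hc.1, hcint]
    simp
  have hGeq : ∀ p, G p = phi p.2 - phi (l p.1) - slo (l p.1) (u p.1) * (p.2 - l p.1) := by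
    intro p
    simp only [G, hc']; ring
  have ha1 : ∀ᵐ p ∂π, ∀ y ∈ T, y ≤ l p.1 ∨ u p.1 ≤ y := by
    refine ae_of_ae_map (f := Prod.fst) (p := fun x => ∀ y ∈ T, y ≤ l x ∨ u x ≤ y)
      (by fun_prop) ?_
    rw [h1]
    exact hG.mono fun x hx => hx.2.2
  have ha2 : ∀ᵐ p ∂π, p.2 ∈ T := by
    refine ae_of_ae_map (f := Prod.snd) (p := fun x => x ∈ T) (by fun_prop) ?_
    rw [h2]
    exact bind_ae μ hl hu hT (hG.mono fun x hx => ⟨hx.1, hx.2.1⟩)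
  have hlu : ∀ x, l x ≤ u x := fun x => by
    rcases h x with h | h <;> linarith
  have ha3 : ∀ᵐ p ∂π, (p.2 = l p.1 ∨ p.2 = u p.1) ∨ 0 < G p := by
    filter_upwards [ha1, ha2] with p hp1 hp2
    rcases hp1 _ hp2 with hp | hp
    · rcases hp.eq_or_lt with hp | hp
      · exact Or.inl (Or.inl hp)
      · right; rw [hGeq]; exact chord_pos (hlu _) (Or.inl hp)
    · rcases hp.eq_or_lt with hp | hp
      · exact Or.inl (Or.inr hp.symm)
      · right; rw [hGeq]; exact chord_pos (hlu _) (Or.inr hp)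
  have hGnn : 0 ≤ᵐ[π] G := by
    filter_upwards [ha3] with p hp
    rcases hp with (hp | hp) | hp
    · rw [hGeq, hp]; simp
    · rw [hGeq, hp, slo_spec]; simp
    · exact hp.le
  have hGz := (integral_eq_zero_iff_of_nonneg_ae hGnn hGi).1 hG0
  filter_upwards [ha3, hGz] with p hp hz
  rcases hp with hp | hp
  · exact hp
  · simp only [Pi.zero_apply] at hz
    linarith

lemma mc_formula (μ : Measure ℝ) [IsProbabilityMeasure μ]
    (hμ : Integrable (fun x : ℝ => x) μ) (hl : Measurable l) (hu : Measurable u) (h : Adm l u)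
    {T : Set ℝ} (hT : MeasurableSet T)
    (hG : ∀ᵐ x ∂μ, l x ∈ T ∧ u x ∈ T ∧ ∀ y ∈ T, y ≤ l x ∨ u x ≤ y)
    (t : ℝ) (ht : t ∈ T) (π : Measure (ℝ × ℝ))
    (hπ : IsMartingaleCoupling π μ (μ.bind (ker0 l u))) {A B : Set ℝ} (hA : MeasurableSet A)
    (hB : MeasurableSet B) :
    π.real (A ×ˢ B) = ∫ x, A.indicator 1 x *
      (∫ y, B.indicator (1 : ℝ → ℝ) y ∂(ker0 l u x)) ∂μ := by
  have hs := mc_support μ hμ hl hu h hT hG t ht π hπ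
  obtain ⟨h1, h2, h3⟩ := hπ
  have hπp : IsProbabilityMeasure π := by
    constructor
    rw [← Set.preimage_univ (f := Prod.fst), ← Measure.map_apply measurable_fst .univ, h1]
    simp
  let a : ℝ → ℝ := A.indicator 1
  let b : ℝ → ℝ := B.indicator 1
  have ham : Measurable a := measurable_one.indicator hA
  have hbm : Measurable b := measurable_one.indicator hB
  have ha1 : ∀ x, |a x| ≤ 1 := fun x => by
    by_cases hx : x ∈ A <;> simp [a, hx]
  have hb01 : ∀ x, 0 ≤ b x ∧ b x ≤ 1 := fun x => by
    by_cases hx : x ∈ B <;> simp [b, hx]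
  let r : ℝ → ℝ := fun x => (b (u x) - b (l x)) / (u x - l x)
  have hrm : Measurable r := by
    have := hbm.comp hu
    have := hbm.comp hl
    exact ((hbm.comp hu).sub (hbm.comp hl)).div (hu.sub hl)
  have hr : ∀ x, r x * (u x - l x) = b (u x) - b (l x) := by
    intro x
    rcases h x with ⟨h1, h2⟩ | ⟨h1, h2⟩
    · exact div_mul_cancel₀ _ (by linarith)
    · simp [h1, h2]
  let c : ℝ → ℝ := fun x => ∫ y, b y ∂(ker0 l u x)
  have hc : ∀ x, c x = b (l x) + r x * (x - l x) := fun x => ker_interp h b _ x (hr x)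
  have hcm : Measurable c := by
    have : c = fun x => b (l x) + r x * (x - l x) := funext hc
    rw [this]
    exact (hbm.comp hl).add (hrm.mul (measurable_id.sub hl))
  have hc1 : ∀ x, 0 ≤ c x ∧ c x ≤ 1 := by
    intro x
    have e : c x = wt l u x * b (l x) + (1 - wt l u x) * b (u x) := ker_integral h b x
    have := wt_mem h x
    have h3 := hb01 (l x)
    have h4 := hb01 (u x)
    rw [e]
    constructor <;> nlinarith
  have heq : ∀ᵐ p ∂π, b p.2 = c p.1 + (p.2 - p.1) * r p.1 := by
    filter_upwards [hs] with p hp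
    rw [hc]
    rcases hp with hp | hp
    · rw [hp]; ring
    · rw [hp]; linear_combination - hr p.1
  have hdi : Integrable (fun p : ℝ × ℝ => (p.2 - p.1) * (r p.1 * a p.1)) π := by
    refine (integrable_const (1 : ℝ)).mono' (Measurable.aestronglyMeasurable (by fun_prop)) ?_
    filter_upwards [heq] with p hp
    have e : (p.2 - p.1) * (r p.1 * a p.1) = (b p.2 - c p.1) * a p.1 := by rw [hp]; ring
    rw [e, norm_mul]
    have h5 := hb01 p.2
    have h6 := hc1 p.1
    have : ‖b p.2 - c p.1‖ ≤ 1 := abs_le.2 ⟨by linarith, by linarith⟩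
    exact mul_le_one₀ this (norm_nonneg _) (ha1 _)
  have hd0 := mart_ext h3 (f := fun x => r x * a x) (hrm.mul ham) hdi
  have hci : Integrable (fun x => a x * c x) μ := by
    refine (integrable_const (1 : ℝ)).mono' (Measurable.aestronglyMeasurable (by fun_prop)) ?_
    refine ae_of_all _ fun x => ?_
    rw [norm_mul]
    exact mul_le_one₀ (ha1 x) (norm_nonneg _) (abs_le.2 ⟨by linarith [(hc1 x).1], (hc1 x).2⟩)
  have e0 : π.real (A ×ˢ B) = ∫ p, (A ×ˢ B).indicator (1 : ℝ × ℝ → ℝ) p ∂π :=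
    (integral_indicator_one (hA.prod hB)).symm
  have e1 : ∫ p, (A ×ˢ B).indicator (1 : ℝ × ℝ → ℝ) p ∂π
      = ∫ p, (a p.1 * c p.1 + (p.2 - p.1) * (r p.1 * a p.1)) ∂π := by
    apply integral_congr_ae
    filter_upwards [heq] with p hp
    have : (A ×ˢ B).indicator (1 : ℝ × ℝ → ℝ) p = a p.1 * b p.2 := by
      by_cases h1 : p.1 ∈ A <;> by_cases h2 : p.2 ∈ B <;>
        simp [a, b, Set.indicator, Set.mem_prod, h1, h2]
    rw [this, hp]; ring
  rw [e0, e1, integral_add (int_fst h1 hci) hdi, hd0, add_zero]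
  exact integral_fst' h1 (f := fun x => a x * c x) hci.1

lemma mc_unique (μ : Measure ℝ) [IsProbabilityMeasure μ]
    (hμ : Integrable (fun x : ℝ => x) μ) (hl : Measurable l) (hu : Measurable u) (h : Adm l u)
    {T : Set ℝ} (hT : MeasurableSet T)
    (hG : ∀ᵐ x ∂μ, l x ∈ T ∧ u x ∈ T ∧ ∀ y ∈ T, y ≤ l x ∨ u x ≤ y)
    (t : ℝ) (ht : t ∈ T) (π : Measure (ℝ × ℝ)) :
    IsMartingaleCoupling π μ (μ.bind (ker0 l u)) ↔ π = μ ⊗ₘ ker l u hl hu := by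
  have ht' : ∀ᵐ x ∂μ, t ≤ l x ∨ u x ≤ t := hG.mono fun x hx => hx.2.2 t ht
  have hm := hit_isMC μ hμ hl hu h t ht'
  have := ker_markov hl hu h
  refine ⟨fun hπ => ?_, fun e => e ▸ hm⟩
  have hπp : IsProbabilityMeasure π := by
    constructor
    rw [← Set.preimage_univ (f := Prod.fst), ← Measure.map_apply measurable_fst .univ, hπ.1]
    simp
  refine Measure.ext_prod fun {A B} hA hB => ?_
  have e1 := mc_formula μ hμ hl hu h hT hG t ht π hπ hA hB
  have e2 := mc_formula μ hμ hl hu h hT hG t ht _ hm hA hB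
  rw [← e2] at e1
  exact (measureReal_eq_measureReal_iff).1 e1

/-! ### The concrete functions -/

/-- points between two points of `T` -/
def good (T : Set ℝ) : Set ℝ := {x | (∃ a ∈ T, a ≤ x) ∧ ∃ b ∈ T, x ≤ b}

noncomputable def lo (T : Set ℝ) (x : ℝ) : ℝ := if x ∈ good T then sSup (T ∩ Set.Iic x) else x
noncomputable def hi (T : Set ℝ) (x : ℝ) : ℝ := if x ∈ good T then sInf (T ∩ Set.Ici x) else x

lemma lo_spec {T : Set ℝ} (hT : IsClosed T) {x : ℝ} (hx : x ∈ good T) :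
    lo T x ∈ T ∧ lo T x ≤ x ∧ ∀ y ∈ T, y ≤ x → y ≤ lo T x := by
  rw [lo, if_pos hx]
  obtain ⟨⟨a, ha, hax⟩, -⟩ := hx
  have hb : BddAbove (T ∩ Set.Iic x) := ⟨x, fun y hy => hy.2⟩
  have := (hT.inter isClosed_Iic).csSup_mem ⟨a, ha, hax⟩ hb
  exact ⟨this.1, this.2, fun y hy hyx => le_csSup hb ⟨hy, hyx⟩⟩

lemma hi_spec {T : Set ℝ} (hT : IsClosed T) {x : ℝ} (hx : x ∈ good T) :
    hi T x ∈ T ∧ x ≤ hi T x ∧ ∀ y ∈ T, x ≤ y → hi T x ≤ y := by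
  rw [hi, if_pos hx]
  obtain ⟨-, ⟨a, ha, hax⟩⟩ := hx
  have hb : BddBelow (T ∩ Set.Ici x) := ⟨x, fun y hy => hy.2⟩
  have := (hT.inter isClosed_Ici).csInf_mem ⟨a, ha, hax⟩ hb
  exact ⟨this.1, this.2, fun y hy hyx => csInf_le hb ⟨hy, hyx⟩⟩

lemma lo_of_mem {T : Set ℝ} (hT : IsClosed T) {x : ℝ} (hx : x ∈ T) : lo T x = x := by
  have hg : x ∈ good T := ⟨⟨x, hx, le_rfl⟩, ⟨x, hx, le_rfl⟩⟩
  have := lo_spec hT hg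
  exact le_antisymm this.2.1 (this.2.2 x hx le_rfl)

lemma hi_of_mem {T : Set ℝ} (hT : IsClosed T) {x : ℝ} (hx : x ∈ T) : hi T x = x := by
  have hg : x ∈ good T := ⟨⟨x, hx, le_rfl⟩, ⟨x, hx, le_rfl⟩⟩
  have := hi_spec hT hg
  exact le_antisymm (this.2.2 x hx le_rfl) this.2.1

lemma adm {T : Set ℝ} (hT : IsClosed T) : Adm (lo T) (hi T) := by
  intro x
  by_cases hx : x ∈ T
  · exact Or.inr ⟨lo_of_mem hT hx, hi_of_mem hT hx⟩
  · by_cases hg : x ∈ good T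
    · left
      have h1 := lo_spec hT hg
      have h2 := hi_spec hT hg
      exact ⟨h1.2.1.lt_of_ne fun e => hx (e ▸ h1.1), h2.2.1.lt_of_ne fun e => hx (e ▸ h2.1)⟩
    · right
      simp [lo, hi, hg]

lemma lo_mono {T : Set ℝ} (hT : IsClosed T) : Monotone (lo T) := by
  intro x y hxy
  by_cases hy : y ∈ good T
  · have h2 := lo_spec hT hy
    by_cases hx : x ∈ good T
    · have h1 := lo_spec hT hx
      exact h2.2.2 _ h1.1 (h1.2.1.trans hxy)
    · have e : lo T x = x := by simp [lo, hx]
      rw [e]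
      by_contra hlt
      obtain ⟨b, hb, hyb⟩ := hy.2
      exact hx ⟨⟨_, h2.1, (not_le.1 hlt).le⟩, ⟨b, hb, hxy.trans hyb⟩⟩
  · have e : lo T y = y := by simp [lo, hy]
    rw [e]
    rcases adm hT x with h | h <;> linarith

lemma hi_mono {T : Set ℝ} (hT : IsClosed T) : Monotone (hi T) := by
  intro x y hxy
  by_cases hx : x ∈ good T
  · have h2 := hi_spec hT hx
    by_cases hy : y ∈ good T
    · have h1 := hi_spec hT hy
      exact h2.2.2 _ h1.1 (hxy.trans h1.2.1)
    · have e : hi T y = y := by simp [hi, hy]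
      rw [e]
      by_contra hlt
      obtain ⟨b, hb, hyb⟩ := hx.1
      exact hy ⟨⟨b, hb, hyb.trans hxy⟩, ⟨_, h2.1, (not_le.1 hlt).le⟩⟩
  · have e : hi T x = x := by simp [hi, hx]
    rw [e]
    rcases adm hT y with h | h <;> linarith

lemma ker0_eq {T : Set ℝ} (hT : IsClosed T) {x : ℝ} (hx : x ∈ good T) :
    kellererDilation T x = ker0 (lo T) (hi T) x := by
  by_cases hxT : x ∈ T
  · simp [kellererDilation, ker0, hxT, wt, lo_of_mem hT hxT, hi_of_mem hT hxT]
  · have hlo : sSup (T ∩ Set.Iic x) = lo T x := by simp [lo, hx]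
    have hhi : sInf (T ∩ Set.Ici x) = hi T x := by simp [hi, hx]
    rw [kellererDilation, if_neg hxT, hlo, hhi, ker0, wt]
    have hlt : lo T x < x ∧ x < hi T x := by
      rcases adm hT x with h | h
      · exact h
      · exact absurd (h.1 ▸ (lo_spec hT hx).1) hxT
    rw [if_pos (hlt.1.trans hlt.2)]
    have : hi T x - lo T x ≠ 0 := by linarith
    congr 4
    field_simp
    ring

lemma ae_good {μ : Measure ℝ} {T : Set ℝ}
    (hsupp : ∀ x ∈ msupport μ, (∃ a ∈ T, a ≤ x) ∧ ∃ b ∈ T, x ≤ b) : ∀ᵐ x ∂μ, x ∈ good T := by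
  have h0 : μ (msupport μ)ᶜ = 0 := by
    apply measure_null_of_locally_null
    intro x hx
    simp only [msupport, Set.mem_compl_iff, Set.mem_ofPred_eq, not_forall] at hx
    obtain ⟨U, hU, hxU, h⟩ := hx
    exact ⟨U, mem_nhdsWithin_of_mem_nhds (hU.mem_nhds hxU), by simpa using h⟩
  have : ∀ᵐ x ∂μ, x ∈ msupport μ := h0
  exact this.mono fun x hx => hsupp x hx

end KD

/-- If `ν = μ P_T` is the hitting projection of `μ` onto a closed set `T` with
`supp μ ⊆ [inf T, sup T]`, then the hitting coupling `μ(id × P_T)` is the unique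
martingale coupling of `μ` and `ν`. -/
theorem hittingCoupling_unique_martingaleCoupling (μ : Measure ℝ) [IsProbabilityMeasure μ]
    (hμ : Integrable (fun x : ℝ => x) μ)
    (T : Set ℝ) (hT : IsClosed T)
    (hsupp : ∀ x ∈ msupport μ, (∃ a ∈ T, a ≤ x) ∧ ∃ b ∈ T, x ≤ b) :
    ∀ π : Measure (ℝ × ℝ),
      IsMartingaleCoupling π μ (μ.bind (kellererDilation T)) ↔ π = hittingCoupling T μ := by
  intro π
  have hg := KD.ae_good hsupp
  have hlm := (KD.lo_mono hT).measurable
  have hum := (KD.hi_mono hT).measurable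
  have hk : kellererDilation T =ᵐ[μ] KD.ker0 (KD.lo T) (KD.hi T) :=
    hg.mono fun x hx => KD.ker0_eq hT hx
  have := KD.ker_markov hlm hum (KD.adm hT)
  have hhit : hittingCoupling T μ = μ ⊗ₘ KD.ker (KD.lo T) (KD.hi T) hlm hum := by
    have hk2 : (fun x => (kellererDilation T x).map fun y => (x, y)) =ᵐ[μ]
        fun x => (KD.ker0 (KD.lo T) (KD.hi T) x).map fun y => (x, y) :=
      hk.mono fun x hx => by simp only [hx]
    have hmeas : Measurable fun x =>
        (KD.ker (KD.lo T) (KD.hi T) hlm hum x).map fun y => (x, y) := by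
      refine Measure.measurable_of_measurable_coe _ fun s hs => ?_
      simp only [Measure.map_apply measurable_prodMk_left hs]
      exact Kernel.measurable_kernel_prodMk_left hs
    unfold hittingCoupling
    rw [Measure.bind_congr_right hk2]
    ext s hs
    rw [Measure.compProd_apply hs]
    refine (Measure.bind_apply hs hmeas.aemeasurable).trans ?_
    simp only [Measure.map_apply measurable_prodMk_left hs]
  obtain ⟨x0, hx0⟩ := hg.exists
  obtain ⟨t, ht, -⟩ := hx0.1
  rw [Measure.bind_congr_right hk, hhit]
  refine KD.mc_unique μ hμ hlm hum (KD.adm hT) hT.measurableSet ?_ t ht π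
  filter_upwards [hg] with x hx
  have h1 := KD.lo_spec hT hx
  have h2 := KD.hi_spec hT hx
  refine ⟨h1.1, h2.1, fun y hy => ?_⟩
  rcases le_total y x with h | h
  · exact Or.inl (h1.2.2 y hy h)
  · exact Or.inr (h2.2.2 y hy h)
end

section
/- Let μ' ≤_{c,+} ν (meaning there exists η with μ' ≤_c η and η ≤ ν setwise). Then the set {ν' : μ' ≤_c ν' and ν' ≤ ν} has a smallest element S^ν(μ') with respect to the convex order ≤_c; i.e. there exists η with μ' ≤_c η, η ≤ ν, and η ≤_c η' for every η' satisfying μ' ≤_c η' and η' ≤ ν. -/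
open MeasureTheory

/-- Convex order on finite measures: `∫ φ dμ ≤ ∫ φ dν` for every convex `φ` for which
both integrals exist. -/
def ConvexOrder (μ ν : Measure ℝ) : Prop :=
  ∀ φ : ℝ → ℝ, ConvexOn ℝ Set.univ φ → Integrable φ μ → Integrable φ ν →
    ∫ x, φ x ∂μ ≤ ∫ x, φ x ∂ν

/-- `μ ≤_{c,+} ν`: there exists `η` with `μ ≤_c η` and `η ≤ ν` setwise. -/
def ConvexPlusOrder (μ ν : Measure ℝ) : Prop :=
  ∃ η : Measure ℝ, ConvexOrder μ η ∧ η ≤ ν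

/-- `η` is the shadow of `μ` in `ν`: the `≤_c`-smallest measure `η` with `μ ≤_c η`
and `η ≤ ν`. -/
def IsShadow (μ ν η : Measure ℝ) : Prop :=
  ConvexOrder μ η ∧ η ≤ ν ∧
    ∀ η' : Measure ℝ, ConvexOrder μ η' → η' ≤ ν → ConvexOrder η η'

open Set Filter Topology ENNReal

lemma cvx_cont {φ : ℝ → ℝ} (h : ConvexOn ℝ univ φ) : Continuous φ := by
  have := h.continuousOn isOpen_univ
  rwa [continuousOn_univ] at this

lemma exists_stieltjes {φ : ℝ → ℝ} (h : ConvexOn ℝ univ φ) :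
    ∃ S : StieltjesFunction ℝ, ∀ x y, x ≤ y → ∫ t in x..y, S t = φ y - φ x := by
  have hm : Monotone (fun x => derivWithin φ (Ioi x) x) := by
    have := h.monotoneOn_rightDeriv
    simpa [monotoneOn_univ] using this
  refine ⟨hm.stieltjesFunction, fun x y hxy => ?_⟩
  have hae : ∀ᵐ t, hm.stieltjesFunction t = derivWithin φ (Ioi t) t := by
    have hc := hm.countable_not_continuousAt
    filter_upwards [hc.ae_notMem volume] with t ht
    simp only [not_not] at ht
    rw [hm.stieltjesFunction_eq]
    exact hm.continuousWithinAt_Ioi_iff_rightLim_eq.1 ht.continuousWithinAt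
  rw [intervalIntegral.integral_congr_ae (g := fun t => derivWithin φ (Ioi t) t)
    (by filter_upwards [hae] with t ht _ using ht)]
  refine intervalIntegral.integral_eq_sub_of_hasDeriv_right_of_le hxy (cvx_cont h).continuousOn
    (fun t _ => ?_) (hm.intervalIntegrable)
  exact h.hasDerivWithinAt_rightDeriv_of_mem_interior (by simp)

lemma call_layer (σ : Measure ℝ) [SFinite σ] (x : ℝ) :
    ∫⁻ k, ENNReal.ofReal (k - x) ∂σ = ∫⁻ t in Ioi x, σ (Ioi t) := by
  have h1 : ∀ k, ENNReal.ofReal (k - x) =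
      ∫⁻ t in Ioi x, {p : ℝ × ℝ | p.2 < p.1}.indicator (fun _ => (1:ℝ≥0∞)) (k, t) := by
    intro k
    have : (fun t => {p : ℝ × ℝ | p.2 < p.1}.indicator (fun _ => (1:ℝ≥0∞)) (k, t)) =
        (Iio k).indicator (fun _ => 1) := by
      ext t; simp [indicator]
    rw [this, lintegral_indicator measurableSet_Iio]
    simp [Measure.restrict_apply, Iio_inter_Ioi]
  simp_rw [h1]
  rw [lintegral_lintegral_swap]
  · congr 1
    ext t
    have : (fun k => {p : ℝ × ℝ | p.2 < p.1}.indicator (fun _ => (1:ℝ≥0∞)) (k, t)) =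
        (Ioi t).indicator (fun _ => 1) := by
      ext t; simp [indicator]
    rw [this, lintegral_indicator measurableSet_Ioi]
    simp
  · apply Measurable.aemeasurable
    refine (measurable_const.indicator (measurableSet_lt measurable_snd measurable_fst))

lemma put_layer (σ : Measure ℝ) [SFinite σ] (x : ℝ) :
    ∫⁻ k, ENNReal.ofReal (x - k) ∂σ = ∫⁻ t in Iio x, σ (Iic t) := by
  have h1 : ∀ k, ENNReal.ofReal (x - k) =
      ∫⁻ t in Iio x, {p : ℝ × ℝ | p.1 ≤ p.2}.indicator (fun _ => (1:ℝ≥0∞)) (k, t) := by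
    intro k
    have : (fun t => {p : ℝ × ℝ | p.1 ≤ p.2}.indicator (fun _ => (1:ℝ≥0∞)) (k, t)) =
        (Ici k).indicator (fun _ => 1) := by
      ext t; simp [indicator]
    rw [this, lintegral_indicator measurableSet_Ici]
    simp [Measure.restrict_apply, Ici_inter_Iio]
  simp_rw [h1]
  rw [lintegral_lintegral_swap]
  · congr 1
    ext t
    have : (fun k => {p : ℝ × ℝ | p.1 ≤ p.2}.indicator (fun _ => (1:ℝ≥0∞)) (k, t)) =
        (Iic t).indicator (fun _ => 1) := by
      ext t; simp [indicator]
    rw [this, lintegral_indicator measurableSet_Iic]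
    simp
  · apply Measurable.aemeasurable
    refine (measurable_const.indicator (measurableSet_le measurable_fst measurable_snd))

lemma setL_sub {s t : Set ℝ} (hs : MeasurableSet s) (ht : MeasurableSet t) (hst : s ⊆ t)
    {f : ℝ → ℝ≥0∞} (h : ∀ x ∈ t \ s, f x = 0) : ∫⁻ x in s, f x = ∫⁻ x in t, f x := by
  rw [← lintegral_indicator hs, ← lintegral_indicator ht]
  congr 1
  ext x
  by_cases h1 : x ∈ s
  · simp [h1, hst h1]
  · by_cases h2 : x ∈ t
    · simp [h1, h2, h x ⟨h2, h1⟩]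
    · simp [h1, h2]

lemma stieltjes_int (S : StieltjesFunction ℝ) (x y : ℝ) : IntervalIntegrable S volume x y :=
  S.mono.intervalIntegrable

/-- base point `0`, left part -/
lemma rep_left {φ : ℝ → ℝ} (S : StieltjesFunction ℝ)
    (hS : ∀ x y, x ≤ y → ∫ t in x..y, S t = φ y - φ x) (x : ℝ) (hx : x ≤ 0) :
    ∫⁻ k in Iic 0, ENNReal.ofReal (k - x) ∂S.measure = ENNReal.ofReal (φ x - φ 0 - S 0 * x) := by
  rw [call_layer]
  have h1 : ∀ t, (S.measure.restrict (Iic 0)) (Ioi t) = ENNReal.ofReal (S 0 - S t) := by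
    intro t
    rw [Measure.restrict_apply measurableSet_Ioi, Ioi_inter_Iic, S.measure_Ioc]
  simp_rw [h1]
  have h2 : ∫⁻ t in Ioi x, ENNReal.ofReal (S 0 - S t) =
      ∫⁻ t in Ioc x 0, ENNReal.ofReal (S 0 - S t) := by
    symm
    apply setL_sub measurableSet_Ioc measurableSet_Ioi Ioc_subset_Ioi_self
    intro t ht
    simp only [Set.mem_sdiff, mem_Ioi, mem_Ioc, not_and, not_le] at ht
    exact ENNReal.ofReal_eq_zero.2 (by linarith [S.mono (ht.2 ht.1).le])
  have hi : IntervalIntegrable (fun t => S 0 - S t) volume x 0 :=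
    intervalIntegrable_const.sub (stieltjes_int S x 0)
  rw [h2, ← ofReal_integral_eq_lintegral_ofReal hi.1, ← intervalIntegral.integral_of_le hx,
    intervalIntegral.integral_sub intervalIntegrable_const (stieltjes_int S x 0), hS x 0 hx]
  · simp; ring_nf
  · filter_upwards [ae_restrict_mem measurableSet_Ioc] with t ht
    simpa using S.mono ht.2

lemma rep_right {φ : ℝ → ℝ} (S : StieltjesFunction ℝ)
    (hS : ∀ x y, x ≤ y → ∫ t in x..y, S t = φ y - φ x) (x : ℝ) (hx : 0 ≤ x) :
    ∫⁻ k in Ioi 0, ENNReal.ofReal (x - k) ∂S.measure = ENNReal.ofReal (φ x - φ 0 - S 0 * x) := by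
  rw [put_layer]
  have h1 : ∀ t, (S.measure.restrict (Ioi 0)) (Iic t) = ENNReal.ofReal (S t - S 0) := by
    intro t
    rw [Measure.restrict_apply measurableSet_Iic, inter_comm, Ioi_inter_Iic, S.measure_Ioc]
  simp_rw [h1]
  have h2 : ∫⁻ t in Iio x, ENNReal.ofReal (S t - S 0) =
      ∫⁻ t in Ioo 0 x, ENNReal.ofReal (S t - S 0) := by
    symm
    apply setL_sub measurableSet_Ioo measurableSet_Iio Ioo_subset_Iio_self
    intro t ht
    simp only [Set.mem_sdiff, mem_Iio, mem_Ioo, not_and, not_lt] at ht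
    have : t ≤ 0 := by
      by_contra h
      push Not at h
      linarith [ht.2 h, ht.1]
    exact ENNReal.ofReal_eq_zero.2 (by linarith [S.mono this])
  have hi : IntervalIntegrable (fun t => S t - S 0) volume 0 x :=
    (stieltjes_int S 0 x).sub intervalIntegrable_const
  rw [h2, restrict_Ioo_eq_restrict_Ioc,
    ← ofReal_integral_eq_lintegral_ofReal hi.1, ← intervalIntegral.integral_of_le hx,
    intervalIntegral.integral_sub (stieltjes_int S 0 x) intervalIntegrable_const, hS 0 x hx]
  · simp; ring_nf
  · filter_upwards [ae_restrict_mem measurableSet_Ioc] with t ht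
    simpa using S.mono ht.1.le

/-- a convex function vanishing at `+∞` is a call potential -/
lemma exists_measure {φ : ℝ → ℝ} (h : ConvexOn ℝ univ φ) (h0 : Tendsto φ atTop (𝓝 0)) :
    ∃ σ : Measure ℝ, ∀ x, ∫⁻ k, ENNReal.ofReal (k - x) ∂σ = ENNReal.ofReal (φ x) := by
  obtain ⟨S, hS⟩ := exists_stieltjes h
  have hup : ∀ x, S x ≤ φ (x + 1) - φ x := by
    intro x
    rw [← hS x (x+1) (by linarith)]
    have := intervalIntegral.integral_mono_on (μ := volume) (a := x) (b := x + 1)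
      (f := fun _ => S x) (g := S) (by linarith)
      intervalIntegrable_const (stieltjes_int S _ _) (fun t ht => S.mono ht.1)
    simpa using this
  have hlo : ∀ x, φ x - φ (x - 1) ≤ S x := by
    intro x
    rw [← hS (x-1) x (by linarith)]
    have := intervalIntegral.integral_mono_on (μ := volume) (a := x - 1) (b := x)
      (g := fun _ => S x) (f := S) (by linarith)
      (stieltjes_int S _ _) intervalIntegrable_const (fun t ht => S.mono ht.2)
    simpa using this
  have hl : Tendsto S atTop (𝓝 0) := by
    have e1 : Tendsto (fun x => φ (x + 1) - φ x) atTop (𝓝 0) := by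
      simpa using (h0.comp (tendsto_atTop_add_const_right atTop (1:ℝ) tendsto_id)).sub h0
    have e2 : Tendsto (fun x => φ x - φ (x - 1)) atTop (𝓝 0) := by
      simpa [sub_eq_add_neg] using h0.sub (h0.comp (tendsto_atTop_add_const_right atTop (-1:ℝ) tendsto_id))
    exact tendsto_of_tendsto_of_tendsto_of_le_of_le e2 e1 hlo hup
  have hneg : ∀ x, S x ≤ 0 := fun x => S.mono.ge_of_tendsto hl x
  refine ⟨S.measure, fun x => ?_⟩
  rw [call_layer]
  have h1 : ∀ t, S.measure (Ioi t) = ENNReal.ofReal (- S t) := by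
    intro t
    rw [S.measure_Ioi hl]; simp
  simp_rw [h1]
  have hcov : AECover (volume.restrict (Ioi x)) atTop (fun y : ℝ => Iic y) :=
    aecover_Iic tendsto_id
  have t1 := hcov.lintegral_tendsto_of_countably_generated
    (f := fun t => ENNReal.ofReal (- S t)) 
    (S.mono.measurable.neg.ennreal_ofReal.aemeasurable)
  have t2 : Tendsto (fun y => ENNReal.ofReal (φ x - φ y)) atTop (𝓝 (ENNReal.ofReal (φ x))) := by
    have := ENNReal.tendsto_ofReal (h0.const_sub (φ x))
    simpa using this
  refine tendsto_nhds_unique (t1.congr' ?_) t2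
  filter_upwards [eventually_ge_atTop x] with y hy
  rw [Measure.restrict_restrict measurableSet_Iic, inter_comm, Ioi_inter_Iic,
    ← ofReal_integral_eq_lintegral_ofReal (f := fun t => - S t) (stieltjes_int S x y).neg.1 
     (ae_of_all _ fun t => by simpa using hneg t)]
  have := hS x y hy
  rw [intervalIntegral.integral_of_le hy] at this
  rw [integral_neg, this]
  simp

lemma convex_of_local_mid {h : ℝ → ℝ} (hc : Continuous h)
    (hm : ∀ x, ∃ ε > 0, ∀ δ, 0 < δ → δ < ε → 2 * h x ≤ h (x - δ) + h (x + δ)) :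
    ConvexOn ℝ univ h := by
  refine LinearOrder.convexOn_of_lt convex_univ ?_
  intro x _ y _ hxy a b ha hb hab
  simp only [smul_eq_mul]
  by_contra! hcon
  set s := (h y - h x) / (y - x) with hs
  have hyx : y - x ≠ 0 := by linarith
  have hs' : s * (y - x) = h y - h x := by rw [hs]; field_simp
  let k : ℝ → ℝ := fun z => h z - h x - s * (z - x)
  have hk : Continuous k := by fun_prop
  have hz0 : a * x + b * y ∈ Icc x y := by
    have e : a = 1 - b := by linarith
    rw [e] at ha ⊢
    constructor <;> nlinarith [mul_pos ha (sub_pos.2 hxy), mul_pos hb (sub_pos.2 hxy)]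
  obtain ⟨zM, hzM, hmax⟩ := isCompact_Icc.exists_isMaxOn ⟨_, hz0⟩ (hk.continuousOn)
  have hM0 : 0 < k zM := by
    refine lt_of_lt_of_le ?_ (hmax hz0)
    have e : a = 1 - b := by linarith
    have : s * (a * x + b * y - x) = b * (h y - h x) := by
      rw [← hs', e]; ring
    simp only [k]
    rw [this]
    rw [e] at hcon ⊢
    linarith
  have hA : IsCompact (Icc x y ∩ k ⁻¹' {k zM}) :=
    isCompact_Icc.inter_right (isClosed_singleton.preimage hk)
  obtain ⟨z, ⟨hz, hzk⟩, hleast⟩ := hA.exists_isLeast ⟨zM, hzM, rfl⟩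
  have hzk' : k z = k zM := hzk
  have hx0 : k x = 0 := by simp [k]
  have hy0 : k y = 0 := by simp only [k]; rw [hs']; ring
  have hzx : x < z := lt_of_le_of_ne hz.1 (by rintro rfl; linarith)
  have hzy : z < y := lt_of_le_of_ne hz.2 (by rintro rfl; linarith)
  obtain ⟨ε, hε, hmid⟩ := hm z
  obtain ⟨δ, hδ0, hδ⟩ := exists_between (lt_min hε (lt_min (sub_pos.2 hzx) (sub_pos.2 hzy)))
  have d1 := lt_of_lt_of_le hδ (min_le_left _ _)
  have d2 := lt_of_lt_of_le hδ ((min_le_right _ _).trans (min_le_left _ _))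
  have d3 := lt_of_lt_of_le hδ ((min_le_right _ _).trans (min_le_right _ _))
  have m := hmid δ hδ0 d1
  have i1 : z - δ ∈ Icc x y := ⟨by linarith, by linarith⟩
  have i2 : z + δ ∈ Icc x y := ⟨by linarith, by linarith⟩
  have k2 : k (z + δ) ≤ k zM := hmax i2
  have k1 : k (z - δ) < k zM := by
    refine lt_of_le_of_ne (hmax i1) (fun he => ?_)
    have := hleast ⟨i1, he⟩
    linarith
  have : 2 * k z ≤ k (z - δ) + k (z + δ) := by
    simp only [k]; linarith
  linarith

lemma cvx_mid {f : ℝ → ℝ} (hf : ConvexOn ℝ univ f) (x δ : ℝ) :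
    2 * f x ≤ f (x - δ) + f (x + δ) := by
  have := hf.2 (mem_univ (x - δ)) (mem_univ (x + δ))
    (show (0:ℝ) ≤ 1 / 2 by norm_num) (show (0:ℝ) ≤ 1 / 2 by norm_num) (by norm_num)
  simp only [smul_eq_mul] at this
  have e : 1 / 2 * (x - δ) + 1 / 2 * (x + δ) = x := by ring
  rw [e] at this
  linarith

lemma cvx_affine (a b : ℝ) : ConvexOn ℝ univ (fun x => a + b * x) := by
  refine ⟨convex_univ, fun x _ y _ s t _ _ hst => le_of_eq ?_⟩
  have : s = 1 - t := by linarith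
  simp only [smul_eq_mul, this]; ring

lemma sub_hull_convex {f g G : ℝ → ℝ} (hf : ConvexOn ℝ univ f) (hg : ConvexOn ℝ univ g)
    (hG : ConvexOn ℝ univ G) (hle : ∀ x, G x ≤ f x - g x)
    (hmax : ∀ c : ℝ → ℝ, ConvexOn ℝ univ c → (∀ x, c x ≤ f x - g x) → ∀ x, c x ≤ G x) :
    ConvexOn ℝ univ (fun x => f x - G x) := by
  have cf := cvx_cont hf
  have cg := cvx_cont hg
  have cG := cvx_cont hG
  refine convex_of_local_mid (cf.sub cG) fun x => ?_
  rcases (hle x).eq_or_lt with heq | hlt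
  · refine ⟨1, one_pos, fun δ _ _ => ?_⟩
    have := cvx_mid hg x δ
    have h1 := hle (x - δ)
    have h2 := hle (x + δ)
    linarith
  · obtain ⟨m, hm1, hm2⟩ := exists_between hlt
    have e1 : ∀ᶠ y in 𝓝 x, G y < m := cG.continuousAt.eventually_lt continuousAt_const hm1
    have e2 : ∀ᶠ y in 𝓝 x, m < f y - g y :=
      continuousAt_const.eventually_lt (cf.sub cg).continuousAt hm2
    obtain ⟨ε, hε, hball⟩ := Metric.eventually_nhds_iff.1 (e1.and e2)
    refine ⟨ε, hε, fun δ hδ0 hδ => ?_⟩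
    have hb : ∀ y, x - δ ≤ y → y ≤ x + δ → G y < m ∧ m < f y - g y := by
      intro y h1 h2
      apply hball
      rw [Real.dist_eq, abs_lt]; constructor <;> linarith
    set s := (G (x + δ) - G (x - δ)) / (2 * δ) with hs
    have hs' : s * (2 * δ) = G (x + δ) - G (x - δ) := by rw [hs]; field_simp
    let l : ℝ → ℝ := fun y => (G (x - δ) - s * (x - δ)) + s * y
    have hl : ConvexOn ℝ univ l := cvx_affine _ _
    have l1 : l (x - δ) = G (x - δ) := by simp [l]
    have l2 : l (x + δ) = G (x + δ) := by simp only [l]; linarith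
    -- outside the interval the chord lies below G
    have key : ∀ y, max (G y) (l y) ≤ f y - g y := by
      intro y
      refine max_le (hle y) ?_
      by_cases hin : x - δ ≤ y ∧ y ≤ x + δ
      · have b1 := (hb (x - δ) le_rfl (by linarith)).1
        have b2 := (hb (x + δ) (by linarith) le_rfl).1
        have b3 := (hb y hin.1 hin.2).2
        have : l y ≤ max (l (x - δ)) (l (x + δ)) :=
          hl.le_max_of_mem_Icc (mem_univ _) (mem_univ _) hin
        rw [l1, l2] at this
        exact this.trans ((max_lt b1 b2).trans b3).le
      · refine le_trans ?_ (hle y)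
        have sl := fun a b c (h1 : a < b) (h2 : b < c) =>
          hG.slope_mono_adjacent (mem_univ a) (mem_univ c) h1 h2
        by_cases h1 : x - δ ≤ y
        · have h2 : x + δ < y := by
            by_contra! h; exact hin ⟨h1, h⟩
          have := sl (x - δ) (x + δ) y (by linarith) h2
          have e : x + δ - (x - δ) = 2 * δ := by ring
          rw [e, ← hs, le_div_iff₀ (by linarith)] at this
          simp only [l] at l2 ⊢
          linarith
        · push Not at h1
          have := sl y (x - δ) (x + δ) h1 (by linarith)
          have e : x + δ - (x - δ) = 2 * δ := by ring
          rw [e, ← hs, div_le_iff₀ (by linarith)] at this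
          simp only [l] at l2 ⊢
          linarith
    have := hmax _ (hG.sup hl) key x
    have hlG : l x ≤ G x := le_trans (le_max_right _ _) this
    have hlm : 2 * l x = l (x - δ) + l (x + δ) := by simp only [l]; ring
    have := cvx_mid hf x δ
    linarith

lemma exists_hull {F c0 : ℝ → ℝ} (h0 : ConvexOn ℝ univ c0) (h0F : ∀ x, c0 x ≤ F x) :
    ∃ G : ℝ → ℝ, ConvexOn ℝ univ G ∧ (∀ x, G x ≤ F x) ∧
      ∀ c : ℝ → ℝ, ConvexOn ℝ univ c → (∀ x, c x ≤ F x) → ∀ x, c x ≤ G x := by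
  let T : Set (ℝ → ℝ) := {c | ConvexOn ℝ univ c ∧ ∀ x, c x ≤ F x}
  have hne : ∀ x, ((fun c : ℝ → ℝ => c x) '' T).Nonempty := fun x => ⟨_, c0, ⟨h0, h0F⟩, rfl⟩
  have hbd : ∀ x, BddAbove ((fun c : ℝ → ℝ => c x) '' T) := by
    intro x; refine ⟨F x, ?_⟩; rintro _ ⟨c, hc, rfl⟩; exact hc.2 x
  have hmax : ∀ c ∈ T, ∀ x, c x ≤ sSup ((fun c : ℝ → ℝ => c x) '' T) :=
    fun c hc x => le_csSup (hbd x) ⟨c, hc, rfl⟩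
  refine ⟨fun x => sSup ((fun c : ℝ → ℝ => c x) '' T), ⟨convex_univ, ?_⟩, ?_, 
    fun c hc hF => hmax c ⟨hc, hF⟩⟩
  · intro x _ y _ a b ha hb hab
    refine csSup_le (hne _) ?_
    rintro _ ⟨c, hc, rfl⟩
    refine (hc.1.2 (mem_univ x) (mem_univ y) ha hb hab).trans ?_
    simp only [smul_eq_mul]
    exact add_le_add (mul_le_mul_of_nonneg_left (hmax c hc x) ha)
      (mul_le_mul_of_nonneg_left (hmax c hc y) hb)
  · intro x
    refine csSup_le (hne _) ?_
    rintro _ ⟨c, hc, rfl⟩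
    exact hc.2 x

noncomputable def callP (η : Measure ℝ) (k : ℝ) : ℝ := ∫ x, max (x - k) 0 ∂η

lemma int_call {η : Measure ℝ} [IsFiniteMeasure η]
    (hη : Integrable (fun x : ℝ => x) η) (k : ℝ) : Integrable (fun x => max (x - k) 0) η :=
  (hη.sub (integrable_const k)).pos_part

lemma call_lint {η : Measure ℝ} [IsFiniteMeasure η]
    (hη : Integrable (fun x : ℝ => x) η) (k : ℝ) : ∫⁻ x, ENNReal.ofReal (x - k) ∂η = ENNReal.ofReal (callP η k) := by
  rw [callP, ofReal_integral_eq_lintegral_ofReal (int_call hη k)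
    (ae_of_all _ fun x => le_max_right _ _)]
  congr 1; ext x
  simp [ENNReal.ofReal_max]

lemma call_nonneg {η : Measure ℝ} (k : ℝ) : 0 ≤ callP η k := integral_nonneg fun _ => le_max_right _ _

lemma call_convex {η : Measure ℝ} [IsFiniteMeasure η]
    (hη : Integrable (fun x : ℝ => x) η) : ConvexOn ℝ univ (callP η) := by
  refine ⟨convex_univ, fun x _ y _ a b ha hb hab => ?_⟩
  simp only [smul_eq_mul, callP]
  rw [← integral_const_mul, ← integral_const_mul,
    ← integral_add ((int_call hη x).const_mul a) ((int_call hη y).const_mul b)]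
  refine integral_mono (int_call hη _) 
    (((int_call hη x).const_mul a).add ((int_call hη y).const_mul b)) fun z => ?_
  have e : a = 1 - b := by linarith
  refine max_le ?_ (by positivity)
  have h1 := mul_le_mul_of_nonneg_left (le_max_left (z - x) 0) ha
  have h2 := mul_le_mul_of_nonneg_left (le_max_left (z - y) 0) hb
  have : z - (a * x + b * y) = a * (z - x) + b * (z - y) := by rw [e]; ring
  simp only [this]
  linarith

lemma call_tendsto {η : Measure ℝ} [IsFiniteMeasure η]
    (hη : Integrable (fun x : ℝ => x) η) : Tendsto (callP η) atTop (𝓝 0) := by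
  rw [show 𝓝 (0:ℝ) = 𝓝 (∫ x, (0:ℝ) ∂η) by simp]
  refine tendsto_integral_filter_of_dominated_convergence (fun x => |x|)
    (Eventually.of_forall fun k => (int_call hη k).1) ?_ hη.abs ?_
  · filter_upwards [eventually_ge_atTop 0] with k hk
    refine ae_of_all _ fun x => ?_
    rw [Real.norm_of_nonneg (le_max_right _ _)]
    exact max_le (by linarith [le_abs_self x]) (abs_nonneg x)
  · refine ae_of_all _ fun x => ?_
    refine tendsto_const_nhds.congr' ?_
    filter_upwards [eventually_ge_atTop x] with k hk
    rw [max_eq_right (by linarith)]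

lemma int_put {η : Measure ℝ} [IsFiniteMeasure η]
    (hη : Integrable (fun x : ℝ => x) η) (k : ℝ) : Integrable (fun x => max (k - x) 0) η :=
  ((integrable_const k).sub hη).pos_part

lemma put_eq {η : Measure ℝ} [IsFiniteMeasure η]
    (hη : Integrable (fun x : ℝ => x) η) (k : ℝ) : ∫ x, max (k - x) 0 ∂η = callP η k - (∫ x, x ∂η) + k * η.real univ := by
  have : ∀ x, max (k - x) 0 = max (x - k) 0 - x + k := by
    intro x
    rcases le_total x k with h | h
    · rw [max_eq_left (by linarith), max_eq_right (by linarith)]; ring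
    · rw [max_eq_right (by linarith), max_eq_left (by linarith)]; ring
  simp_rw [this]
  have hs : Integrable (fun x => max (x - k) 0 - x) η := (int_call hη k).sub hη
  rw [integral_add hs (integrable_const k), integral_sub (int_call hη k) hη]
  simp [callP, mul_comm]

lemma put_lint {η : Measure ℝ} [IsFiniteMeasure η]
    (hη : Integrable (fun x : ℝ => x) η) (k : ℝ) : ∫⁻ x, ENNReal.ofReal (k - x) ∂η =
    ENNReal.ofReal (callP η k - (∫ x, x ∂η) + k * η.real univ) := by
  rw [← put_eq hη, ofReal_integral_eq_lintegral_ofReal (int_put hη k)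
    (ae_of_all _ fun x => le_max_right _ _)]
  congr 1; ext x
  simp [ENNReal.ofReal_max]

lemma put_tendsto {η : Measure ℝ} [IsFiniteMeasure η]
    (hη : Integrable (fun x : ℝ => x) η) : Tendsto (fun k => callP η k - (∫ x, x ∂η) + k * η.real univ)
    atBot (𝓝 0) := by
  simp_rw [← put_eq hη]
  rw [show 𝓝 (0:ℝ) = 𝓝 (∫ x, (0:ℝ) ∂η) by simp]
  refine tendsto_integral_filter_of_dominated_convergence (fun x => |x|)
    (Eventually.of_forall fun k => (int_put hη k).1) ?_ hη.abs ?_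
  · filter_upwards [eventually_le_atBot 0] with k hk
    refine ae_of_all _ fun x => ?_
    rw [Real.norm_of_nonneg (le_max_right _ _)]
    exact max_le (by linarith [neg_abs_le x]) (abs_nonneg x)
  · refine ae_of_all _ fun x => ?_
    refine tendsto_const_nhds.congr' ?_
    filter_upwards [eventually_le_atBot x] with k hk
    rw [max_eq_right (by linarith)]


lemma tail_le {α β : Measure ℝ} (hfin : ∀ k, ∫⁻ x, ENNReal.ofReal (x - k) ∂α ≠ ∞)
    (he : ∀ k, ∫⁻ x, ENNReal.ofReal (x - k) ∂α = ∫⁻ x, ENNReal.ofReal (x - k) ∂β) (k : ℝ) :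
    α (Ioi k) ≤ β (Ioi k) := by
  have key : ∀ t > 0, α (Ioi (k + t)) ≤ β (Ioi k) := by
    intro t ht
    have h1 : ENNReal.ofReal t * α (Ioi (k + t)) + ∫⁻ x, ENNReal.ofReal (x - (k + t)) ∂α ≤
        ∫⁻ x, ENNReal.ofReal (x - k) ∂α := by
      rw [← setLIntegral_const, ← lintegral_indicator measurableSet_Ioi, ← lintegral_add_right _
        (by fun_prop)]
      refine lintegral_mono fun x => ?_
      by_cases hx : x ∈ Ioi (k + t)
      · have hx' : k + t < x := hx
        simp only [indicator_of_mem hx]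
        rw [← ENNReal.ofReal_add ht.le (by linarith)]
        exact ENNReal.ofReal_le_ofReal (by linarith)
      · simp only [indicator_of_notMem hx, zero_add]
        exact ENNReal.ofReal_le_ofReal (by linarith)
    have h2 : ∫⁻ x, ENNReal.ofReal (x - k) ∂β ≤
        ENNReal.ofReal t * β (Ioi k) + ∫⁻ x, ENNReal.ofReal (x - (k + t)) ∂β := by
      rw [← setLIntegral_const, ← lintegral_indicator measurableSet_Ioi, ← lintegral_add_right _
        (by fun_prop)]
      refine lintegral_mono fun x => ?_
      by_cases hx : x ∈ Ioi k
      · simp only [indicator_of_mem hx]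
        refine le_trans (ENNReal.ofReal_le_ofReal ?_) (ENNReal.ofReal_add_le)
        linarith
      · have hx' : x ≤ k := not_lt.1 hx
        rw [ENNReal.ofReal_of_nonpos (by linarith)]
        exact zero_le
    rw [← he, ← he] at h2
    have h3 := ENNReal.le_of_add_le_add_right (hfin _) (h1.trans h2)
    exact (ENNReal.mul_le_mul_iff_right (by simpa using ht) ENNReal.ofReal_ne_top).1 h3
  have hU : Ioi k = ⋃ n : ℕ, Ioi (k + 1 / ((n:ℝ) + 1)) := by
    ext x
    simp only [mem_Ioi, mem_iUnion]
    constructor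
    · intro h
      obtain ⟨n, hn⟩ := exists_nat_one_div_lt (sub_pos.2 h)
      exact ⟨n, by linarith⟩
    · rintro ⟨n, hn⟩
      have : 0 < 1 / ((n:ℝ) + 1) := by positivity
      linarith
  rw [hU, Monotone.measure_iUnion]
  · rw [← hU]
    exact iSup_le fun n => key _ (by positivity)
  · intro n m hnm
    apply Ioi_subset_Ioi
    gcongr

lemma eq_of_call {α ν : Measure ℝ} [IsFiniteMeasure ν] (hν : Integrable (fun x : ℝ => x) ν)
    (he : ∀ k, ∫⁻ x, ENNReal.ofReal (x - k) ∂α = ENNReal.ofReal (callP ν k)) : α = ν := by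
  have he' : ∀ k, ∫⁻ x, ENNReal.ofReal (x - k) ∂α = ∫⁻ x, ENNReal.ofReal (x - k) ∂ν :=
    fun k => by rw [he, call_lint hν]
  have hI : ∀ k, α (Ioi k) = ν (Ioi k) := fun k => le_antisymm
    (tail_le (fun k => by rw [he]; exact ENNReal.ofReal_ne_top) he' k)
    (tail_le (fun k => by rw [call_lint hν]; exact ENNReal.ofReal_ne_top) (fun k => (he' k).symm) k)
  have hU : (univ : Set ℝ) = ⋃ n : ℕ, Ioi (-(n:ℝ)) := by
    symm; rw [eq_univ_iff_forall]
    intro x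
    obtain ⟨n, hn⟩ := exists_nat_gt (-x)
    exact mem_iUnion.2 ⟨n, by simp only [mem_Ioi]; linarith⟩
  have hmono : Monotone (fun n : ℕ => Ioi (-(n:ℝ))) := by
    intro n m hnm
    apply Ioi_subset_Ioi
    simpa using hnm
  have hu : α univ = ν univ := by
    rw [hU, hmono.measure_iUnion, hmono.measure_iUnion]
    simp_rw [hI]
  have : IsFiniteMeasure α := ⟨by rw [hu]; exact measure_lt_top _ _⟩
  refine Measure.ext_of_Iic _ _ fun k => ?_
  have e : Iic k = (Ioi k)ᶜ := by simp
  rw [e, measure_compl measurableSet_Ioi (measure_ne_top _ _),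
    measure_compl measurableSet_Ioi (measure_ne_top _ _), hI, hu]

lemma convexOrder_of_call {α β : Measure ℝ} [IsFiniteMeasure α] [IsFiniteMeasure β]
    (hα : Integrable (fun x : ℝ => x) α) (hβ : Integrable (fun x : ℝ => x) β)
    (hm : α.real univ = β.real univ) (hb : ∫ x, x ∂α = ∫ x, x ∂β)
    (hc : ∀ k, callP α k ≤ callP β k) : ConvexOrder α β := by
  intro φ hφ hφα hφβ
  obtain ⟨S, hS⟩ := exists_stieltjes hφ
  let g : ℝ → ℝ := fun x => φ x - φ 0 - S 0 * x
  have hg0 : ∀ x, 0 ≤ g x := by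
    intro x
    rcases le_total 0 x with hx | hx
    · have := intervalIntegral.integral_mono_on (μ := volume) (a := 0) (b := x)
        (f := fun _ => S 0) (g := S) hx
        intervalIntegrable_const (stieltjes_int S _ _) (fun t ht => S.mono ht.1)
      rw [hS 0 x hx] at this
      simp at this
      simp only [g]; linarith
    · have := intervalIntegral.integral_mono_on (μ := volume) (a := x) (b := 0)
        (g := fun _ => S 0) (f := S) hx
        (stieltjes_int S _ _) intervalIntegrable_const (fun t ht => S.mono ht.2)
      rw [hS x 0 hx] at this
      simp at this
      simp only [g]; linarith
  have hrep : ∀ x, ENNReal.ofReal (g x) = ∫⁻ k in Ioi 0, ENNReal.ofReal (x - k) ∂S.measure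
      + ∫⁻ k in Iic 0, ENNReal.ofReal (k - x) ∂S.measure := by
    intro x
    rcases le_total 0 x with hx | hx
    · rw [rep_right S hS x hx, setLIntegral_congr_fun measurableSet_Iic (g := fun _ => 0)]
      · simp [g]
      · intro k hk
        exact ENNReal.ofReal_of_nonpos (by linarith [show k ≤ 0 from hk])
    · rw [rep_left S hS x hx, setLIntegral_congr_fun measurableSet_Ioi (g := fun _ => 0)]
      · simp [g]
      · intro k hk
        exact ENNReal.ofReal_of_nonpos (by linarith [show 0 < k from hk])
  have hlin : ∀ η : Measure ℝ, IsFiniteMeasure η → ∫⁻ x, ENNReal.ofReal (g x) ∂η =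
      ∫⁻ k in Ioi 0, ∫⁻ x, ENNReal.ofReal (x - k) ∂η ∂S.measure
      + ∫⁻ k in Iic 0, ∫⁻ x, ENNReal.ofReal (k - x) ∂η ∂S.measure := by
    intro η _
    simp_rw [hrep]
    have m1 : Measurable (fun p : ℝ × ℝ => ENNReal.ofReal (p.1 - p.2)) := by fun_prop
    have m2 : Measurable (fun p : ℝ × ℝ => ENNReal.ofReal (p.2 - p.1)) := by fun_prop
    rw [lintegral_add_left (Measurable.lintegral_prod_right' m1)]
    congr 1
    · exact lintegral_lintegral_swap m1.aemeasurable
    · exact lintegral_lintegral_swap m2.aemeasurable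
  have hint : ∀ η : Measure ℝ, IsFiniteMeasure η → Integrable φ η → Integrable (fun x : ℝ => x) η →
      Integrable g η ∧ ∫ x, φ x ∂η = ∫ x, g x ∂η + φ 0 * η.real univ + S 0 * ∫ x, x ∂η := by
    intro η _ h1 h2
    have hg : Integrable g η := (h1.sub (integrable_const _)).sub (h2.const_mul _)
    refine ⟨hg, ?_⟩
    simp only [g]
    have hs : Integrable (fun x => φ x - φ 0) η := h1.sub (integrable_const _)
    rw [integral_sub hs (h2.const_mul _), integral_sub h1
      (integrable_const _), integral_const_mul]
    simp; ring
  obtain ⟨gα, eα⟩ := hint α inferInstance hφα hα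
  obtain ⟨gβ, eβ⟩ := hint β inferInstance hφβ hβ
  rw [eα, eβ, hm, hb]
  gcongr 1
  gcongr 1
  have hle : ∫⁻ x, ENNReal.ofReal (g x) ∂α ≤ ∫⁻ x, ENNReal.ofReal (g x) ∂β := by
    rw [hlin α inferInstance, hlin β inferInstance]
    simp_rw [call_lint hα, call_lint hβ, put_lint hα, put_lint hβ, hm, hb]
    gcongr with k k
    · exact hc k
    · exact hc k
  rw [← ofReal_integral_eq_lintegral_ofReal gα (ae_of_all _ hg0),
    ← ofReal_integral_eq_lintegral_ofReal gβ (ae_of_all _ hg0)] at hle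
  exact (ENNReal.ofReal_le_ofReal_iff (integral_nonneg hg0)).1 hle

lemma call_of_convexOrder {α β : Measure ℝ} [IsFiniteMeasure α] [IsFiniteMeasure β]
    (hα : Integrable (fun x : ℝ => x) α) (hβ : Integrable (fun x : ℝ => x) β)
    (h : ConvexOrder α β) :
    α.real univ = β.real univ ∧ ∫ x, x ∂α = ∫ x, x ∂β ∧ ∀ k, callP α k ≤ callP β k := by
  have c := fun a b => h _ (cvx_affine a b)
    ((integrable_const a).add (hα.const_mul b)) ((integrable_const a).add (hβ.const_mul b))
  refine ⟨?_, ?_, fun k => ?_⟩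
  · have h1 := c 1 0
    have h2 := c (-1) 0
    simp at h1 h2
    linarith
  · have h1 := c 0 1
    have h2 := c 0 (-1)
    simp only [zero_add, one_mul, neg_mul] at h1 h2
    rw [integral_neg, integral_neg] at h2
    linarith
  · refine h _ ?_ (int_call hα k) (int_call hβ k)
    have := (cvx_affine (-k) 1).sup (cvx_affine 0 0)
    convert! this using 1
    ext x
    simp; ring_nf

lemma sub_call_convex {η ν : Measure ℝ} [IsFiniteMeasure ν] (hν : Integrable (fun x : ℝ => x) ν)
    (hle : η ≤ ν) : ConvexOn ℝ univ (fun k => callP ν k - callP η k) ∧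
      ∀ k, 0 ≤ callP ν k - callP η k := by
  have : IsFiniteMeasure η := isFiniteMeasure_of_le ν hle
  have hη := hν.mono_measure hle
  have hρ : Integrable (fun x : ℝ => x) (ν - η) := hν.mono_measure Measure.sub_le
  have e : ∀ k, callP ν k - callP η k = callP (ν - η) k := by
    intro k
    have h := Measure.sub_add_cancel_of_le hle
    have : callP ν k = callP (ν - η + η) k := by rw [h]
    rw [this, callP, integral_add_measure (int_call hρ k) (int_call hη k)]
    simp [callP]
  simp_rw [e]
  exact ⟨call_convex hρ, fun k => call_nonneg k⟩

theorem shadow_exists (μ' ν : Measure ℝ) [IsFiniteMeasure μ'] [IsFiniteMeasure ν]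
    (hμ' : Integrable (fun x : ℝ => x) μ') (hν : Integrable (fun x : ℝ => x) ν)
    (h : ConvexPlusOrder μ' ν) :
    ∃ η : Measure ℝ, IsShadow μ' ν η := by
  obtain ⟨η0, hc0, hle0⟩ := h
  have hF : ∀ η', ConvexOrder μ' η' → η' ≤ ν → IsFiniteMeasure η' ∧
      Integrable (fun x : ℝ => x) η' ∧ μ'.real univ = η'.real univ ∧
      ∫ x, x ∂μ' = ∫ x, x ∂η' ∧ ∀ k, callP μ' k ≤ callP η' k := by
    intro η' h1 h2
    have f : IsFiniteMeasure η' := isFiniteMeasure_of_le ν h2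
    have i := hν.mono_measure h2
    exact ⟨f, i, call_of_convexOrder hμ' i h1⟩
  obtain ⟨f0, i0, m0, b0, c0⟩ := hF η0 hc0 hle0
  obtain ⟨v0, p0⟩ := sub_call_convex hν hle0
  obtain ⟨G, hG, hGle, hGmax⟩ := exists_hull (F := fun k => callP ν k - callP μ' k) v0
    (fun k => by linarith [c0 k])
  have hh := sub_hull_convex (call_convex hν) (call_convex hμ') hG hGle hGmax
  have G0 := hGmax _ v0 (fun k => by linarith [c0 k])
  have Gpos : ∀ k, 0 ≤ G k := fun k => (p0 k).trans (G0 k)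
  have hpos : ∀ k, 0 ≤ callP ν k - G k := fun k => by
    linarith [hGle k, call_nonneg (η := μ') k]
  have Glim : Tendsto G atTop (𝓝 0) :=
    tendsto_of_tendsto_of_tendsto_of_le_of_le tendsto_const_nhds (call_tendsto hν) Gpos
      (fun k => by linarith [hpos k])
  have hlim : Tendsto (fun k => callP ν k - G k) atTop (𝓝 0) := by
    simpa using (call_tendsto hν).sub Glim
  obtain ⟨ρ, hρ⟩ := exists_measure hG Glim
  obtain ⟨η, hη⟩ := exists_measure hh hlim
  have hsum : η + ρ = ν := by
    refine eq_of_call hν fun k => ?_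
    rw [lintegral_add_measure, hη, hρ, ← ENNReal.ofReal_add (hpos k) (Gpos k)]
    simp
  have hle : η ≤ ν := by rw [← hsum]; exact Measure.le_add_right le_rfl
  have fη : IsFiniteMeasure η := isFiniteMeasure_of_le ν hle
  have iη := hν.mono_measure hle
  have hcall : ∀ k, callP η k = callP ν k - G k := by
    intro k
    have := hη k
    rw [call_lint iη] at this
    exact (ENNReal.ofReal_eq_ofReal_iff (call_nonneg k) (hpos k)).1 this
  have up : ∀ k, callP η k ≤ callP η0 k := fun k => by rw [hcall]; linarith [G0 k]
  have lo : ∀ k, callP μ' k ≤ callP η k := fun k => by rw [hcall]; linarith [hGle k]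
  -- equality of mass and mean
  have hmb : μ'.real univ = η.real univ ∧ ∫ x, x ∂μ' = ∫ x, x ∂η := by
    set A := (∫ x, x ∂μ') - ∫ x, x ∂η with hA
    set B := μ'.real univ - η.real univ with hB
    have t1 := put_tendsto hμ'
    have t2 := put_tendsto iη
    have t3 := put_tendsto i0
    rw [← m0, ← b0] at t3
    have lim : Tendsto (fun k => A - k * B) atBot (𝓝 0) := by
      have l1 := t2.sub t3
      have l2 := t2.sub t1
      rw [sub_zero] at l1 l2
      refine tendsto_of_tendsto_of_tendsto_of_le_of_le l1 l2 (fun k => ?_) (fun k => ?_)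
      · have := up k
        simp only [hA, hB]; nlinarith
      · have := lo k
        simp only [hA, hB]; nlinarith
    have lim2 : Tendsto (fun k => A - (k + (-1)) * B) atBot (𝓝 0) :=
      lim.comp (tendsto_atBot_add_const_right atBot (-1:ℝ) tendsto_id)
    have hB0 : B = 0 := by
      have := lim2.sub lim
      have e : (fun k : ℝ => A - (k + (-1)) * B - (A - k * B)) = fun _ => B := by
        ext k; ring
      rw [e, sub_zero] at this
      exact tendsto_nhds_unique tendsto_const_nhds this
    have hA0 : A = 0 := by
      rw [hB0] at lim
      simp only [mul_zero, sub_zero] at lim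
      exact tendsto_nhds_unique tendsto_const_nhds lim
    exact ⟨by linarith, by linarith⟩
  refine ⟨η, convexOrder_of_call hμ' iη hmb.1 hmb.2 lo, hle, fun η' h1 h2 => ?_⟩
  obtain ⟨f1, i1, m1, b1, c1⟩ := hF η' h1 h2
  obtain ⟨v1, p1⟩ := sub_call_convex hν h2
  refine convexOrder_of_call iη i1 (hmb.1.symm.trans m1) (hmb.2.symm.trans b1) fun k => ?_
  have := hGmax _ v1 (fun k => by linarith [c1 k]) k
  rw [hcall]
  linarith
end

section
/- Let γ₁, γ₂, ν be finite positive measures on ℝ with finite first moments and suppose γ₁ + γ₂ ≤_{c,+} ν. Then γ₂ ≤_{c,+} ν − S^ν(γ₁), and the shadow satisfies the associativity formula S^ν(γ₁ + γ₂) = S^ν(γ₁) + S^{ν − S^ν(γ₁)}(γ₂). -/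
open MeasureTheory

section Aux
open Set Filter Topology

namespace ShadowAux

/-- the largest convex minorant argument -/
lemma sub_hull_convex (f g D : ℝ → ℝ) (hf : ConvexOn ℝ univ f) (hg : ConvexOn ℝ univ g)
    (hD : ConvexOn ℝ univ D) (hDle : ∀ x, D x ≤ f x - g x)
    (hmax : ∀ E : ℝ → ℝ, ConvexOn ℝ univ E → (∀ x, E x ≤ f x - g x) → ∀ x, E x ≤ D x) :
    ConvexOn ℝ univ (fun x => f x - D x) := by
  -- three point criterion
  have conv3 : ∀ {p : ℝ → ℝ}, ConvexOn ℝ univ p → ∀ {a c b : ℝ}, a ≤ c → c ≤ b →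
      ∀ l s : ℝ, p a ≤ l + s * a → p b ≤ l + s * b → p c ≤ l + s * c := by
    intro p hp a c b hac hcb l s ha hb
    rcases hac.eq_or_lt with rfl | hac
    · exact ha
    rcases hcb.eq_or_lt with rfl | hcb
    · exact hb
    have hpos : 0 < b - a := by linarith
    have := hp.2 (mem_univ a) (mem_univ b)
      (show 0 ≤ (b - c) / (b - a) from div_nonneg (by linarith) hpos.le)
      (show 0 ≤ (c - a) / (b - a) from div_nonneg (by linarith) hpos.le)
      (by field_simp; ring)
    have e : ((b - c) / (b - a)) • a + ((c - a) / (b - a)) • b = c := by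
      simp only [smul_eq_mul]; field_simp; ring
    rw [e] at this
    simp only [smul_eq_mul] at this
    have h1 : (b - c) / (b - a) * p a ≤ (b - c) / (b - a) * (l + s * a) :=
      mul_le_mul_of_nonneg_left ha (div_nonneg (by linarith) hpos.le)
    have h2 : (c - a) / (b - a) * p b ≤ (c - a) / (b - a) * (l + s * b) :=
      mul_le_mul_of_nonneg_left hb (div_nonneg (by linarith) hpos.le)
    have e2 : (b - c) / (b - a) * (l + s * a) + (c - a) / (b - a) * (l + s * b) = l + s * c := by
      field_simp; ring
    linarith
  have mk3 : ∀ {p : ℝ → ℝ}, (∀ a c b l s : ℝ, a < c → c < b → p a = l + s * a →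
      p b = l + s * b → p c ≤ l + s * c) → ConvexOn ℝ univ p := by
    intro p h
    refine LinearOrder.convexOn_of_lt convex_univ ?_
    intro x _ y _ hxy a b ha hb hab
    have hpos : 0 < y - x := by linarith
    have hb' : b = 1 - a := by linarith
    subst hb'
    have := h x (a * x + (1 - a) * y) y (p x - (p y - p x) / (y - x) * x) ((p y - p x) / (y - x))
      (by nlinarith) (by nlinarith) (by ring) (by field_simp; ring)
    simp only [smul_eq_mul]
    refine this.trans (le_of_eq ?_)
    field_simp; ring
  refine mk3 ?_
  intro x z y l s hxz hzy hx hy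
  by_contra! hcon
  classical
  let k : ℝ → ℝ := fun t => f t - (l + s * t)
  have hk : ConvexOn ℝ univ k := by
    refine mk3 ?_
    intro a c b l' s' hac hcb ha hb
    have := conv3 hf hac.le hcb.le (l' + l) (s' + s) (by simp only [k] at ha; linarith)
      (by simp only [k] at hb; linarith)
    simp only [k]; linarith
  let E : ℝ → ℝ := fun t => if x ≤ t ∧ t ≤ y then max (D t) (k t) else D t
  have hDE : ∀ t, D t ≤ E t := by
    intro t; simp only [E]; split_ifs
    · exact le_max_left _ _
    · exact le_rfl
  have hEk : ∀ t, x ≤ t → t ≤ y → k t ≤ E t := by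
    intro t h1 h2; simp only [E]; rw [if_pos ⟨h1, h2⟩]; exact le_max_right _ _
  have hkx : k x = D x := by simp only [k]; linarith
  have hky : k y = D y := by simp only [k]; linarith
  have hE : ConvexOn ℝ univ E := by
    refine mk3 ?_
    intro a c b l' s' hac hcb ha hb
    have hD0 : ∀ t, a ≤ t → t ≤ b → D t ≤ l' + s' * t := fun t h1 h2 =>
      conv3 hD h1 h2 l' s' ((hDE a).trans ha.le) ((hDE b).trans hb.le)
    have hDc := hD0 c hac.le hcb.le
    by_cases hc : x ≤ c ∧ c ≤ y
    · have : E c = max (D c) (k c) := by simp only [E]; rw [if_pos hc]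
      rw [this]
      refine max_le hDc ?_
      refine conv3 hk (a := max a x) (b := min b y) (max_le hac.le hc.1) (le_min hcb.le hc.2) l' s'
        ?_ ?_
      · rcases le_total a x with h | h
        · rw [max_eq_right h, hkx]; exact hD0 x h (hc.1.trans hcb.le)
        · rw [max_eq_left h]; exact (hEk a h (hac.le.trans hc.2)).trans ha.le
      · rcases le_total b y with h | h
        · rw [min_eq_left h]; exact (hEk b (hc.1.trans hcb.le) h).trans hb.le
        · rw [min_eq_right h, hky]; exact hD0 y (hac.le.trans hc.2) h
    · have : E c = D c := by simp only [E]; rw [if_neg hc]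
      rw [this]; exact hDc
  have hEle : ∀ t, E t ≤ f t - g t := by
    intro t
    simp only [E]
    split_ifs with ht
    · refine max_le (hDle t) ?_
      have := conv3 hg ht.1 ht.2 l s (by have := hDle x; linarith) (by have := hDle y; linarith)
      simp only [k]; linarith
    · exact hDle t
  have h1 := hmax E hE hEle z
  have h2 := hEk z hxz.le hzy.le
  simp only [k] at h2
  linarith

lemma exists_hull (F D₀ : ℝ → ℝ) (hD₀ : ConvexOn ℝ univ D₀) (h : ∀ x, D₀ x ≤ F x) :
    ∃ D : ℝ → ℝ, ConvexOn ℝ univ D ∧ (∀ x, D x ≤ F x) ∧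
      ∀ E : ℝ → ℝ, ConvexOn ℝ univ E → (∀ x, E x ≤ F x) → ∀ x, E x ≤ D x := by
  let S : Set (ℝ → ℝ) := {E | ConvexOn ℝ univ E ∧ ∀ x, E x ≤ F x}
  have hne : Nonempty S := ⟨⟨D₀, hD₀, h⟩⟩
  have hbdd : ∀ x, BddAbove (range fun E : S => E.1 x) := by
    intro x; refine ⟨F x, ?_⟩; rintro _ ⟨E, rfl⟩; exact E.2.2 x
  refine ⟨fun x => ⨆ E : S, E.1 x, ?_, fun x => ciSup_le fun E => E.2.2 x, ?_⟩
  · refine ⟨convex_univ, ?_⟩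
    intro x _ y _ a b ha hb hab
    refine ciSup_le fun E => ?_
    refine (E.2.1.2 (mem_univ x) (mem_univ y) ha hb hab).trans ?_
    simp only [smul_eq_mul]
    exact add_le_add (mul_le_mul_of_nonneg_left (le_ciSup (hbdd x) E) ha)
      (mul_le_mul_of_nonneg_left (le_ciSup (hbdd y) E) hb)
  · intro E hE hEF x
    exact le_ciSup (hbdd x) ⟨E, hE, hEF⟩

/-- right derivative -/
noncomputable def rd (f : ℝ → ℝ) (x : ℝ) : ℝ := derivWithin f (Ioi x) x

lemma rd_has {f : ℝ → ℝ} (hf : ConvexOn ℝ univ f) (x : ℝ) :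
    HasDerivWithinAt f (rd f x) (Ioi x) x :=
  hf.hasDerivWithinAt_rightDeriv_of_mem_interior (by simp)

lemma rd_mono {f : ℝ → ℝ} (hf : ConvexOn ℝ univ f) : Monotone (rd f) := by
  have := hf.monotoneOn_rightDeriv
  rw [interior_univ] at this
  exact monotoneOn_univ.1 this

lemma cont {f : ℝ → ℝ} (hf : ConvexOn ℝ univ f) : Continuous f := by
  have := hf.continuousOn_interior
  rw [interior_univ] at this
  exact continuousOn_univ.1 this

lemma rd_right_cont {f : ℝ → ℝ} (hf : ConvexOn ℝ univ f) (x : ℝ) :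
    ContinuousWithinAt (rd f) (Ici x) x := by
  have hc := cont hf
  refine tendsto_order.2 ⟨fun a ha => ?_, fun a ha => ?_⟩
  · filter_upwards [self_mem_nhdsWithin] with y hy
    exact ha.trans_le (rd_mono hf hy)
  · have h1 := (hasDerivWithinAt_iff_tendsto_slope' self_notMem_Ioi).mp (rd_has hf x)
    obtain ⟨z, hz1, hz2⟩ := ((h1.eventually_lt_const ha).and self_mem_nhdsWithin).exists
    have h2 : ContinuousAt (fun y => slope f y z) x := by
      simp only [slope_def_field]
      refine ContinuousAt.div (by fun_prop) (by fun_prop) ?_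
      have : x < z := hz2
      linarith
    have h3 : ∀ᶠ y in 𝓝[≥] x, slope f y z < a :=
      (h2.tendsto.mono_left nhdsWithin_le_nhds).eventually_lt_const hz1
    have h4 : ∀ᶠ y in 𝓝[≥] x, y < z := (eventually_lt_nhds hz2).filter_mono nhdsWithin_le_nhds
    filter_upwards [h3, h4] with y h5 h6
    exact (hf.le_slope_of_hasDerivWithinAt_Ioi (mem_univ y) (mem_univ z) h6 (rd_has hf y)).trans_lt h5

/-- the Stieltjes function of the right derivative -/
noncomputable def st (f : ℝ → ℝ) (hf : ConvexOn ℝ univ f) : StieltjesFunction ℝ where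
  toFun := rd f
  mono' := rd_mono hf
  right_continuous' := rd_right_cont hf

lemma st_apply (f : ℝ → ℝ) (hf : ConvexOn ℝ univ f) (x : ℝ) : st f hf x = rd f x := rfl

/-- kernel -/
noncomputable def K (x s : ℝ) : ℝ := if 0 < s then max (x - s) 0 else max (s - x) 0

lemma K_nonneg (x s : ℝ) : 0 ≤ K x s := by unfold K; split_ifs <;> exact le_max_right _ _

lemma K_meas : Measurable (fun p : ℝ × ℝ => K p.1 p.2) := by
  unfold K
  refine Measurable.ite (measurableSet_lt measurable_const measurable_snd) ?_ ?_ <;> fun_prop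

lemma ftc {f : ℝ → ℝ} (hf : ConvexOn ℝ univ f) (a b : ℝ) (_hab : a ≤ b) :
    ∫ t in a..b, rd f t = f b - f a :=
  intervalIntegral.integral_eq_sub_of_hasDeriv_right (cont hf).continuousOn
    (fun x _ => rd_has hf x) (rd_mono hf).intervalIntegrable

lemma rep {f : ℝ → ℝ} (hf : ConvexOn ℝ univ f) (x : ℝ) :
    ENNReal.ofReal (f x - f 0 - rd f 0 * x) = ∫⁻ s, ENNReal.ofReal (K x s) ∂(st f hf).measure := by
  set m := (st f hf).measure with hm
  rcases le_total 0 x with hx | hx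
  · let A : Set (ℝ × ℝ) := {p | 0 < p.1 ∧ p.1 ≤ p.2 ∧ p.2 ≤ x}
    have hA : MeasurableSet A :=
      (measurableSet_lt measurable_const measurable_fst).inter
        ((measurableSet_le measurable_fst measurable_snd).inter
          (measurableSet_le measurable_snd measurable_const))
    have hK : ∀ s, ENNReal.ofReal (K x s) = volume (Prod.mk s ⁻¹' A) := by
      intro s
      by_cases h : 0 < s
      · have e : Prod.mk s ⁻¹' A = Icc s x := by ext t; simp [A, h]
        rw [e]; simp [K, h, ENNReal.ofReal_max]
      · have e : Prod.mk s ⁻¹' A = ∅ := by ext t; simp [A, h]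
        rw [e]; simp [K, h]; linarith
    have hR : ∀ t, m ((fun s => (s, t)) ⁻¹' A) =
        (Ioc 0 x).indicator (fun t => ENNReal.ofReal (rd f t - rd f 0)) t := by
      intro t
      by_cases h : t ∈ Ioc 0 x
      · rw [indicator_of_mem h]
        have e : (fun s => (s, t)) ⁻¹' A = Ioc 0 t := by ext s; simp [A, h.2]
        rw [e, hm, StieltjesFunction.measure_Ioc]; rfl
      · rw [indicator_of_notMem h]
        have e : (fun s => (s, t)) ⁻¹' A = ∅ := by
          ext s; simp only [A, mem_preimage, mem_ofPred_eq, mem_empty_iff_false, iff_false]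
          rintro ⟨h1, h2, h3⟩; exact h ⟨h1.trans_le h2, h3⟩
        rw [e, measure_empty]
    rw [lintegral_congr hK, ← Measure.prod_apply hA, Measure.prod_apply_symm hA,
      lintegral_congr hR, lintegral_indicator measurableSet_Ioc,
      ← ofReal_integral_eq_lintegral_ofReal]
    · rw [← intervalIntegral.integral_of_le hx, intervalIntegral.integral_sub
        (rd_mono hf).intervalIntegrable (by simp), ftc hf]
      · simp [mul_comm]
      · exact hx
    · have : IntervalIntegrable (fun t => rd f t - rd f 0) volume 0 x :=
        (rd_mono hf).intervalIntegrable.sub (by simp)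
      exact (intervalIntegrable_iff_integrableOn_Ioc_of_le hx).1 this
    · filter_upwards [ae_restrict_mem measurableSet_Ioc] with t ht
      exact sub_nonneg.2 (rd_mono hf ht.1.le)
  · let A : Set (ℝ × ℝ) := {p | x < p.2 ∧ p.2 < p.1 ∧ p.1 ≤ 0}
    have hA : MeasurableSet A :=
      (measurableSet_lt measurable_const measurable_snd).inter
        ((measurableSet_lt measurable_snd measurable_fst).inter
          (measurableSet_le measurable_fst measurable_const))
    have hK : ∀ s, ENNReal.ofReal (K x s) = volume (Prod.mk s ⁻¹' A) := by
      intro s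
      by_cases h : 0 < s
      · have e : Prod.mk s ⁻¹' A = ∅ := by ext t; simp [A, h]
        rw [e]; simp [K, h]; linarith
      · have h' : s ≤ 0 := not_lt.1 h
        have e : Prod.mk s ⁻¹' A = Ioo x s := by ext t; simp [A, h']
        rw [e]; simp [K, h, ENNReal.ofReal_max]
    have hR : ∀ t, m ((fun s => (s, t)) ⁻¹' A) =
        (Ioc x 0).indicator (fun t => ENNReal.ofReal (rd f 0 - rd f t)) t := by
      intro t
      by_cases h : t ∈ Ioc x 0
      · rw [indicator_of_mem h]
        have e : (fun s => (s, t)) ⁻¹' A = Ioc t 0 := by ext s; simp [A, h.1]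
        rw [e, hm, StieltjesFunction.measure_Ioc]; rfl
      · rw [indicator_of_notMem h]
        have e : (fun s => (s, t)) ⁻¹' A = ∅ := by
          ext s; simp only [A, mem_preimage, mem_ofPred_eq, mem_empty_iff_false, iff_false]
          rintro ⟨h1, h2, h3⟩; exact h ⟨h1, h2.le.trans h3⟩
        rw [e, measure_empty]
    rw [lintegral_congr hK, ← Measure.prod_apply hA, Measure.prod_apply_symm hA,
      lintegral_congr hR, lintegral_indicator measurableSet_Ioc,
      ← ofReal_integral_eq_lintegral_ofReal]
    · rw [← intervalIntegral.integral_of_le hx, intervalIntegral.integral_sub (by simp)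
        (rd_mono hf).intervalIntegrable, ftc hf]
      · congr 1; simp; ring
      · exact hx
    · have : IntervalIntegrable (fun t => rd f 0 - rd f t) volume x 0 :=
        IntervalIntegrable.sub (by simp) (rd_mono hf).intervalIntegrable
      exact (intervalIntegrable_iff_integrableOn_Ioc_of_le hx).1 this
    · filter_upwards [ae_restrict_mem measurableSet_Ioc] with t ht
      exact sub_nonneg.2 (rd_mono hf ht.2)

lemma tangent_le {f : ℝ → ℝ} (hf : ConvexOn ℝ univ f) (x : ℝ) :
    0 ≤ f x - f 0 - rd f 0 * x := by
  rcases le_total 0 x with hx | hx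
  · have h1 : ∫ t in (0:ℝ)..x, rd f 0 ≤ ∫ t in (0:ℝ)..x, rd f t :=
      intervalIntegral.integral_mono_on hx (by simp) (rd_mono hf).intervalIntegrable
        (fun t ht => rd_mono hf ht.1)
    rw [ftc hf _ _ hx] at h1
    simp at h1; linarith
  · have h1 : ∫ t in x..(0:ℝ), rd f t ≤ ∫ t in x..(0:ℝ), rd f 0 :=
      intervalIntegral.integral_mono_on hx (rd_mono hf).intervalIntegrable (by simp)
        (fun t ht => rd_mono hf ht.2)
    rw [ftc hf _ _ hx] at h1
    simp at h1; linarith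

end ShadowAux

namespace ShadowAux

/-- finite measure with finite first moment -/
structure Good (μ : Measure ℝ) : Prop where
  fin : IsFiniteMeasure μ
  int : Integrable (fun x : ℝ => x) μ

lemma Good.mono {μ ν : Measure ℝ} (h : Good ν) (hle : μ ≤ ν) : Good μ :=
  have := h.fin
  ⟨isFiniteMeasure_of_le ν hle, h.int.mono_measure hle⟩

lemma Good.add {μ ν : Measure ℝ} (h : Good μ) (h' : Good ν) : Good (μ + ν) :=
  have := h.fin
  have := h'.fin
  ⟨inferInstance, h.int.add_measure h'.int⟩

/-- call function -/
noncomputable def C (μ : Measure ℝ) (k : ℝ) : ℝ := ∫ x, max (x - k) 0 ∂μ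
/-- put function -/
noncomputable def P (μ : Measure ℝ) (k : ℝ) : ℝ := ∫ x, max (k - x) 0 ∂μ

lemma Good.call {μ : Measure ℝ} (h : Good μ) (k : ℝ) : Integrable (fun x => max (x - k) 0) μ :=
  have := h.fin
  (h.int.sub (integrable_const k)).pos_part

lemma Good.put {μ : Measure ℝ} (h : Good μ) (k : ℝ) : Integrable (fun x => max (k - x) 0) μ :=
  have := h.fin
  ((integrable_const k).sub h.int).pos_part

lemma C_add {μ ν : Measure ℝ} (h : Good μ) (h' : Good ν) (k : ℝ) :
    C (μ + ν) k = C μ k + C ν k := integral_add_measure (h.call k) (h'.call k)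

lemma C_sub {μ ν : Measure ℝ} (h : Good ν) (hle : μ ≤ ν) (k : ℝ) :
    C (ν - μ) k = C ν k - C μ k := by
  have hμ := h.mono hle
  have := hμ.fin
  have h1 : C (ν - μ + μ) k = _ := C_add (h.mono Measure.sub_le) hμ k
  rw [Measure.sub_add_cancel_of_le hle] at h1
  linarith

lemma C_eq {μ : Measure ℝ} (h : Good μ) (k : ℝ) :
    C μ k = (∫ x, x ∂μ) - μ.real univ * k + P μ k := by
  have := h.fin
  have h1 : C μ k - P μ k = ∫ x, (x - k) ∂μ := by
    unfold C P
    rw [← integral_sub (h.call k) (h.put k)]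
    congr 1; funext x
    rcases le_total x k with hx | hx
    · rw [max_eq_right (by linarith), max_eq_left (by linarith)]; ring
    · rw [max_eq_left (by linarith), max_eq_right (by linarith)]; ring
  rw [integral_sub h.int (integrable_const k)] at h1
  simp at h1; linarith

lemma call_convex (k : ℝ) : ConvexOn ℝ univ (fun x : ℝ => max (x - k) 0) :=
  ((convexOn_id convex_univ).sub (concaveOn_const k convex_univ)).sup
    (convexOn_const 0 convex_univ)

lemma C_convex {μ : Measure ℝ} (h : Good μ) : ConvexOn ℝ univ (C μ) := by
  refine ⟨convex_univ, ?_⟩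
  intro x _ y _ a b ha hb hab
  simp only [smul_eq_mul]
  unfold C
  rw [← integral_const_mul, ← integral_const_mul,
    ← integral_add ((h.call x).const_mul a) ((h.call y).const_mul b)]
  refine integral_mono (h.call _) (((h.call x).const_mul a).add ((h.call y).const_mul b)) ?_
  intro t
  refine max_le ?_ ?_
  · have h1 := mul_le_mul_of_nonneg_left (le_max_left (t - x) 0) ha
    have h2 := mul_le_mul_of_nonneg_left (le_max_left (t - y) 0) hb
    have h3 : t = a * t + b * t := by rw [← add_mul, hab, one_mul]
    simp only; linarith
  · exact add_nonneg (mul_nonneg ha (le_max_right _ _)) (mul_nonneg hb (le_max_right _ _))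

lemma C_tendsto {μ : Measure ℝ} (h : Good μ) : Tendsto (C μ) atTop (𝓝 0) := by
  have h0 : (∫ _ : ℝ, (0:ℝ) ∂μ) = 0 := by simp
  rw [← h0]
  unfold C
  refine tendsto_integral_filter_of_dominated_convergence (fun x => |x|) ?_ ?_ h.int.abs ?_
  · exact Eventually.of_forall fun k => (h.call k).aestronglyMeasurable
  · filter_upwards [eventually_ge_atTop 0] with k hk
    refine Eventually.of_forall fun x => ?_
    rw [Real.norm_eq_abs, abs_of_nonneg (le_max_right _ _)]
    exact max_le (by linarith [le_abs_self x]) (abs_nonneg x)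
  · refine Eventually.of_forall fun x => ?_
    refine tendsto_const_nhds.congr' ?_
    filter_upwards [eventually_ge_atTop x] with k hk
    rw [max_eq_right (by linarith)]

lemma P_tendsto {μ : Measure ℝ} (h : Good μ) : Tendsto (P μ) atBot (𝓝 0) := by
  have h0 : (∫ _ : ℝ, (0:ℝ) ∂μ) = 0 := by simp
  rw [← h0]
  unfold P
  refine tendsto_integral_filter_of_dominated_convergence (fun x => |x|) ?_ ?_ h.int.abs ?_
  · exact Eventually.of_forall fun k => (h.put k).aestronglyMeasurable
  · filter_upwards [eventually_le_atBot 0] with k hk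
    refine Eventually.of_forall fun x => ?_
    rw [Real.norm_eq_abs, abs_of_nonneg (le_max_right _ _)]
    exact max_le (by linarith [neg_abs_le x]) (abs_nonneg x)
  · refine Eventually.of_forall fun x => ?_
    refine tendsto_const_nhds.congr' ?_
    filter_upwards [eventually_le_atBot x] with k hk
    rw [max_eq_right (by linarith)]

lemma diff_tendsto {μ η : Measure ℝ} (h : Good μ) (h' : Good η)
    (hm : μ.real univ = η.real univ) (hb : ∫ x, x ∂μ = ∫ x, x ∂η) :
    Tendsto (fun k => C η k - C μ k) atTop (𝓝 0) ∧
    Tendsto (fun k => C η k - C μ k) atBot (𝓝 0) := by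
  constructor
  · simpa using (C_tendsto h').sub (C_tendsto h)
  · have e : (fun k => C η k - C μ k) = fun k => P η k - P μ k := by
      funext k; rw [C_eq h, C_eq h', hm, hb]; ring
    rw [e]
    simpa using (P_tendsto h').sub (P_tendsto h)

lemma affine_top {α β : ℝ} (h : Tendsto (fun k : ℝ => α + β * k) atTop (𝓝 0)) : α = 0 ∧ β = 0 := by
  have h1 : Tendsto (fun k : ℝ => α + β * (k + 1)) atTop (𝓝 0) :=
    h.comp (tendsto_atTop_add_const_right _ 1 tendsto_id)
  have h2 := h1.sub h
  have e : (fun k : ℝ => α + β * (k + 1) - (α + β * k)) = fun _ => β := by funext k; ring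
  rw [e, sub_zero] at h2
  have hβ : β = 0 := tendsto_nhds_unique tendsto_const_nhds h2
  subst hβ
  simp only [zero_mul, add_zero] at h
  exact ⟨tendsto_nhds_unique tendsto_const_nhds h, rfl⟩

lemma affine_bot {α β : ℝ} (h : Tendsto (fun k : ℝ => α + β * k) atBot (𝓝 0)) : α = 0 ∧ β = 0 := by
  have h1 : Tendsto (fun k : ℝ => α + (-β) * k) atTop (𝓝 0) := by
    refine (h.comp tendsto_neg_atTop_atBot).congr fun k => ?_
    simp
  have := affine_top h1
  exact ⟨this.1, by linarith [this.2]⟩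

lemma order_props {μ η : Measure ℝ} (h : Good μ) (h' : Good η) (ho : ConvexOrder μ η) :
    μ.real univ = η.real univ ∧ ∫ x, x ∂μ = ∫ x, x ∂η ∧ ∀ k, C μ k ≤ C η k := by
  have := h.fin
  have := h'.fin
  refine ⟨le_antisymm ?_ ?_, le_antisymm ?_ ?_, fun k => ?_⟩
  · simpa using ho (fun _ => 1) (convexOn_const 1 convex_univ) (integrable_const _)
      (integrable_const _)
  · simpa using ho (fun _ => -1) (convexOn_const (-1) convex_univ) (integrable_const _)
      (integrable_const _)
  · exact ho (fun x => x) (convexOn_id convex_univ) h.int h'.int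
  · have := ho (fun x => -x) (concaveOn_id convex_univ).neg h.int.neg h'.int.neg
    rw [integral_neg, integral_neg] at this
    linarith
  · exact ho _ (call_convex k) (h.call k) (h'.call k)

lemma order_of {μ η : Measure ℝ} (h : Good μ) (h' : Good η)
    (hm : μ.real univ = η.real univ) (hb : ∫ x, x ∂μ = ∫ x, x ∂η) (hC : ∀ k, C μ k ≤ C η k) :
    ConvexOrder μ η := by
  intro φ hφ i1 i2
  have := h.fin
  have := h'.fin
  have hP : ∀ k, P μ k ≤ P η k := by
    intro k; have := hC k; rw [C_eq h, C_eq h', hm, hb] at this; linarith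
  let ψ : ℝ → ℝ := fun x => φ x - φ 0 - rd φ 0 * x
  have key : ∀ {ρ : Measure ℝ}, Good ρ → ∫⁻ x, ENNReal.ofReal (ψ x) ∂ρ =
      ∫⁻ s, ENNReal.ofReal (if 0 < s then P ρ s + ((∫ x, x ∂ρ) - ρ.real univ * s) else P ρ s)
        ∂(st φ hφ).measure := by
    intro ρ hρ
    have := hρ.fin
    rw [lintegral_congr (fun x => rep hφ x), lintegral_lintegral_swap]
    · refine lintegral_congr fun s => ?_
      split_ifs with hs
      · rw [show P ρ s + ((∫ x, x ∂ρ) - ρ.real univ * s) = C ρ s by rw [C_eq hρ]; ring]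
        simp only [K, hs, if_true]
        exact (ofReal_integral_eq_lintegral_ofReal (hρ.call s)
          (Eventually.of_forall fun x => le_max_right _ _)).symm
      · simp only [K, hs, if_false]
        exact (ofReal_integral_eq_lintegral_ofReal (hρ.put s)
          (Eventually.of_forall fun x => le_max_right _ _)).symm
    · exact (ENNReal.measurable_ofReal.comp K_meas).aemeasurable
  have hle : ∫⁻ x, ENNReal.ofReal (ψ x) ∂μ ≤ ∫⁻ x, ENNReal.ofReal (ψ x) ∂η := by
    rw [key h, key h']
    refine lintegral_mono fun s => ENNReal.ofReal_le_ofReal ?_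
    split_ifs
    · rw [hm, hb]; linarith [hP s]
    · exact hP s
  have j1 : Integrable ψ μ := (i1.sub (integrable_const _)).sub (h.int.const_mul _)
  have j2 : Integrable ψ η := (i2.sub (integrable_const _)).sub (h'.int.const_mul _)
  have hψ : ∀ x, 0 ≤ ψ x := tangent_le hφ
  have h1 : ∫ x, ψ x ∂μ ≤ ∫ x, ψ x ∂η := by
    rw [integral_eq_lintegral_of_nonneg_ae (Eventually.of_forall hψ) j1.aestronglyMeasurable,
      integral_eq_lintegral_of_nonneg_ae (Eventually.of_forall hψ) j2.aestronglyMeasurable]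
    exact ENNReal.toReal_mono j2.lintegral_lt_top.ne hle
  simp only [ψ] at h1
  have i1' : Integrable (fun x => φ x - φ 0) μ := i1.sub (integrable_const _)
  have i2' : Integrable (fun x => φ x - φ 0) η := i2.sub (integrable_const _)
  rw [integral_sub i1' (h.int.const_mul _),
    integral_sub i1 (integrable_const _), integral_const_mul,
    integral_sub i2' (h'.int.const_mul _),
    integral_sub i2 (integrable_const _), integral_const_mul] at h1
  simp only [integral_const, hm, hb] at h1
  linarith

lemma rd_C {ν : Measure ℝ} (h : Good ν) (k : ℝ) : rd (C ν) k = - ν.real (Ioi k) := by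
  have := h.fin
  have h1 := (hasDerivWithinAt_iff_tendsto_slope' self_notMem_Ioi).mp (rd_has (C_convex h) k)
  refine tendsto_nhds_unique h1 ?_
  have e0 : - ν.real (Ioi k) = ∫ x, (Ioi k).indicator (fun _ => (-1:ℝ)) x ∂ν := by
    rw [integral_indicator measurableSet_Ioi]; simp
  have e1 : ∀ y, slope (C ν) k y = ∫ x, (y - k)⁻¹ * (max (x - y) 0 - max (x - k) 0) ∂ν := by
    intro y
    rw [slope_def_field, integral_const_mul, integral_sub (h.call y) (h.call k)]
    unfold C; rw [div_eq_inv_mul]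
  rw [e0, show slope (C ν) k = _ from funext e1]
  refine tendsto_integral_filter_of_dominated_convergence (fun _ => (1:ℝ)) ?_ ?_
    (integrable_const _) ?_
  · exact Eventually.of_forall fun y =>
      (((h.call y).sub (h.call k)).const_mul _).aestronglyMeasurable
  · filter_upwards [self_mem_nhdsWithin] with y hy
    refine Eventually.of_forall fun x => ?_
    have hy : 0 < y - k := sub_pos.2 hy
    rw [norm_mul, norm_inv, Real.norm_eq_abs, Real.norm_eq_abs, abs_of_pos hy,
      inv_mul_le_iff₀ hy, mul_one]
    refine (abs_max_sub_max_le_abs _ _ _).trans ?_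
    rw [show x - y - (x - k) = -(y - k) by ring, abs_neg, abs_of_pos hy]
  · refine Eventually.of_forall fun x => ?_
    refine tendsto_const_nhds.congr' ?_
    by_cases hx : k < x
    · have : ∀ᶠ y in 𝓝[>] k, y < x := (eventually_lt_nhds hx).filter_mono nhdsWithin_le_nhds
      filter_upwards [this, self_mem_nhdsWithin] with y h2 h3
      have hy : 0 < y - k := sub_pos.2 h3
      rw [indicator_of_mem (show x ∈ Ioi k from hx), max_eq_left (by linarith),
        max_eq_left (by linarith)]
      field_simp; ring
    · filter_upwards [self_mem_nhdsWithin] with y h3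
      have hy : 0 < y - k := sub_pos.2 h3
      rw [indicator_of_notMem (show x ∉ Ioi k from hx), max_eq_right (by linarith),
        max_eq_right (by linarith)]
      ring

lemma st_C {ν : Measure ℝ} (h : Good ν) : (st (C ν) (C_convex h)).measure = ν := by
  have := h.fin
  refine Measure.ext_of_Ioc _ _ fun a b hab => ?_
  rw [StieltjesFunction.measure_Ioc, st_apply, st_apply, rd_C h, rd_C h]
  have e : ν.real (Ioi a) = ν.real (Ioc a b) + ν.real (Ioi b) := by
    rw [← measureReal_union (by simp) measurableSet_Ioi,
      Ioc_union_Ioi_eq_Ioi hab.le]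
  rw [e, ← ofReal_measureReal]
  congr 1; ring

lemma rd_add {f g : ℝ → ℝ} (hf : ConvexOn ℝ univ f) (hg : ConvexOn ℝ univ g) (x : ℝ) :
    rd (fun t => f t + g t) x = rd f x + rd g x :=
  ((rd_has hf x).add (rd_has hg x)).derivWithin (uniqueDiffWithinAt_Ioi x)

lemma affine_rep {f : ℝ → ℝ} (hf : ConvexOn ℝ univ f) (hg : Good (st f hf).measure) :
    ∃ α β : ℝ, ∀ x, f x = C (st f hf).measure x + (α + β * x) := by
  set m := (st f hf).measure with hm
  have := hg.fin
  refine ⟨f 0 - C m 0, rd f 0 + m.real (Ioi 0), fun x => ?_⟩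
  have h1 := congrArg ENNReal.toReal (rep hf x)
  rw [ENNReal.toReal_ofReal (tangent_le hf x), ← hm, ← integral_eq_lintegral_of_nonneg_ae
    (Eventually.of_forall fun s => K_nonneg x s)
    (K_meas.comp measurable_prodMk_left).aestronglyMeasurable] at h1
  have e : ∀ s, K x s = max (s - x) 0 - max (s - 0) 0 + (Ioi (0:ℝ)).indicator (fun _ => x) s := by
    intro s
    unfold K
    by_cases hs : 0 < s
    · rw [if_pos hs, indicator_of_mem (show s ∈ Ioi (0:ℝ) from hs), sub_zero, max_eq_left hs.le]
      rcases le_total x s with h | h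
      · rw [max_eq_right (by linarith), max_eq_left (by linarith)]; ring
      · rw [max_eq_left (by linarith), max_eq_right (by linarith)]; ring
    · rw [if_neg hs, indicator_of_notMem (show s ∉ Ioi (0:ℝ) from hs), sub_zero,
        max_eq_right (not_lt.1 hs)]
      ring
  have i1 : Integrable (fun s => max (s - x) 0 - max (s - 0) 0) m := (hg.call x).sub (hg.call 0)
  rw [integral_congr_ae (Eventually.of_forall e),
    integral_add i1
      ((integrable_const x).indicator measurableSet_Ioi),
    integral_sub (hg.call x) (hg.call 0), integral_indicator measurableSet_Ioi] at h1
  simp only [integral_const, smul_eq_mul, measureReal_restrict_apply_univ] at h1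
  unfold C
  linarith

lemma existence {γ ν : Measure ℝ} (hγ : Good γ) (hν : Good ν) (D₀ : ℝ → ℝ)
    (hD₀ : ConvexOn ℝ univ D₀) (hle : ∀ x, D₀ x ≤ C ν x - C γ x)
    (htop : Tendsto (fun x => C ν x - C γ x - D₀ x) atTop (𝓝 0))
    (hbot : Tendsto (fun x => C ν x - C γ x - D₀ x) atBot (𝓝 0)) :
    ∃ θ : Measure ℝ, θ ≤ ν ∧ ConvexOrder γ θ ∧
      ∀ E : ℝ → ℝ, ConvexOn ℝ univ E → (∀ x, E x ≤ C ν x - C γ x) →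
        ∀ x, E x ≤ C ν x - C θ x := by
  obtain ⟨D, hD, hDle, hmax⟩ := exists_hull (fun x => C ν x - C γ x) D₀ hD₀ hle
  have hh := sub_hull_convex (C ν) (C γ) D (C_convex hν) (C_convex hγ) hD hDle hmax
  set h : ℝ → ℝ := fun x => C ν x - D x with hdef
  have hsum : (st h hh).measure + (st D hD).measure = ν := by
    rw [← StieltjesFunction.measure_add]
    conv_rhs => rw [← st_C hν]
    congr 1
    ext x
    rw [StieltjesFunction.add_apply, st_apply, st_apply, st_apply, ← rd_add hh hD]
    congr 1
    funext t; simp [hdef]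
  have hθν : (st h hh).measure ≤ ν := by
    conv_rhs => rw [← hsum]
    exact Measure.le_add_right le_rfl
  have hθ := hν.mono hθν
  obtain ⟨α, β, hαβ⟩ := affine_rep hh hθ
  set θ := (st h hh).measure with hθdef
  have hD0 := hmax D₀ hD₀ hle
  have sq : ∀ l : Filter ℝ, Tendsto (fun x => C ν x - C γ x - D₀ x) l (𝓝 0) →
      Tendsto (fun x => h x - C γ x) l (𝓝 0) := by
    intro l hl
    refine tendsto_of_tendsto_of_tendsto_of_le_of_le tendsto_const_nhds hl
      (fun x => ?_) (fun x => ?_)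
    · have := hDle x; simp only [hdef]; linarith
    · have := hD0 x; simp only [hdef]; linarith
  have t1 : Tendsto (fun x : ℝ => α + β * x) atTop (𝓝 0) := by
    have := ((sq _ htop).sub (C_tendsto hθ)).add (C_tendsto hγ)
    simp only [sub_zero, add_zero] at this
    refine this.congr fun x => ?_
    rw [hαβ x]; ring
  obtain ⟨rfl, rfl⟩ := affine_top t1
  have hC : ∀ x, h x = C θ x := fun x => by rw [hαβ x]; ring
  have t2 : Tendsto (fun x : ℝ => ((∫ x, x ∂θ) - ∫ x, x ∂γ) + (γ.real univ - θ.real univ) * x)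
      atBot (𝓝 0) := by
    have := ((sq _ hbot).sub (P_tendsto hθ)).add (P_tendsto hγ)
    simp only [sub_zero, add_zero] at this
    refine this.congr fun x => ?_
    rw [hC x, C_eq hθ, C_eq hγ]; ring
  obtain ⟨e1, e2⟩ := affine_bot t2
  refine ⟨θ, hθν, order_of hγ hθ (by linarith) (by linarith) fun k => ?_, fun E hE hEle x => ?_⟩
  · rw [← hC k]; have := hDle k; simp only [hdef]; linarith
  · rw [← hC x]; have := hmax E hE hEle x; simp only [hdef]; linarith

lemma shadow_max {γ ν η : Measure ℝ} (hγ : Good γ) (hν : Good ν) (hs : IsShadow γ ν η)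
    (E : ℝ → ℝ) (hE : ConvexOn ℝ univ E) (hEle : ∀ x, E x ≤ C ν x - C γ x) (x : ℝ) :
    E x ≤ C ν x - C η x := by
  obtain ⟨ho, hle, hmin⟩ := hs
  have hη := hν.mono hle
  obtain ⟨p1, p2, p3⟩ := order_props hγ hη ho
  obtain ⟨q1, q2⟩ := diff_tendsto hγ hη p1 p2
  have e : (fun x => C ν x - C γ x - C (ν - η) x) = fun k => C η k - C γ k := by
    funext k; rw [C_sub hν hle]; ring
  obtain ⟨θ, hθ, hγθ, hθE⟩ := existence hγ hν (C (ν - η)) (C_convex (hν.mono Measure.sub_le))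
    (fun x => by rw [C_sub hν hle]; linarith [p3 x]) (by rw [e]; exact q1) (by rw [e]; exact q2)
  have := (order_props hη (hν.mono hθ) (hmin θ hγθ hθ)).2.2 x
  linarith [hθE E hE hEle x]

end ShadowAux

end Aux

open Set Filter Topology ShadowAux in
/-- Associativity of the shadow: if `γ₁ + γ₂ ≤_{c,+} ν` then
`γ₂ ≤_{c,+} ν − S^ν(γ₁)` and `S^ν(γ₁ + γ₂) = S^ν(γ₁) + S^{ν − S^ν(γ₁)}(γ₂)`. -/
theorem shadow_add (γ₁ γ₂ ν : Measure ℝ)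
    [IsFiniteMeasure γ₁] [IsFiniteMeasure γ₂] [IsFiniteMeasure ν]
    (h₁ : Integrable (fun x : ℝ => x) γ₁) (h₂ : Integrable (fun x : ℝ => x) γ₂)
    (hν : Integrable (fun x : ℝ => x) ν)
    (h : ConvexPlusOrder (γ₁ + γ₂) ν)
    (η₁ : Measure ℝ) (hη₁ : IsShadow γ₁ ν η₁) :
    ConvexPlusOrder γ₂ (ν - η₁) ∧
      ∀ η₂ : Measure ℝ, IsShadow γ₂ (ν - η₁) η₂ → IsShadow (γ₁ + γ₂) ν (η₁ + η₂) := by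
  have g1 : Good γ₁ := ⟨inferInstance, h₁⟩
  have g2 : Good γ₂ := ⟨inferInstance, h₂⟩
  have g12 := g1.add g2
  have gν : Good ν := ⟨inferInstance, hν⟩
  have hle := hη₁.2.1
  have gη₁ := gν.mono hle
  have := gη₁.fin
  have gν' : Good (ν - η₁) := gν.mono Measure.sub_le
  obtain ⟨p1, p2, p3⟩ := order_props g1 gη₁ hη₁.1
  -- the basic inequality for competitors
  have comp : ∀ η' : Measure ℝ, ConvexOrder (γ₁ + γ₂) η' → η' ≤ ν →
      ∀ x, C (ν - η') x ≤ C (ν - η₁) x - C γ₂ x := by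
    intro η' ho' hle' x
    have g' := gν.mono hle'
    obtain ⟨q1, q2, q3⟩ := order_props g12 g' ho'
    have := shadow_max g1 gν hη₁ (fun x => C (ν - η') x + C γ₂ x)
      ((C_convex (gν.mono Measure.sub_le)).add (C_convex g2)) (fun t => by
        have := q3 t
        rw [C_add g1 g2] at this
        rw [C_sub gν hle']; linarith) x
    rw [C_sub gν hle]
    linarith
  constructor
  · obtain ⟨η', ho', hle'⟩ := h
    have g' := gν.mono hle'
    obtain ⟨q1, q2, q3⟩ := order_props g12 g' ho'
    obtain ⟨d1, d2⟩ := diff_tendsto g12 g' q1 q2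
    have hc := comp η' ho' hle'
    have sq : ∀ l : Filter ℝ, Tendsto (fun k => C η' k - C (γ₁ + γ₂) k) l (𝓝 0) →
        Tendsto (fun x => C (ν - η₁) x - C γ₂ x - C (ν - η') x) l (𝓝 0) := by
      intro l hl
      refine tendsto_of_tendsto_of_tendsto_of_le_of_le tendsto_const_nhds hl
        (fun x => ?_) (fun x => ?_)
      · have := hc x; simp only; linarith
      · have := p3 x
        simp only
        rw [C_sub gν hle, C_sub gν hle', C_add g1 g2]; linarith
    obtain ⟨θ, hθ, ho, -⟩ := existence g2 gν' (C (ν - η')) (C_convex (gν.mono Measure.sub_le))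
      hc (sq _ d1) (sq _ d2)
    exact ⟨θ, ho, hθ⟩
  · intro η₂ hη₂
    have gη₂ := gν'.mono hη₂.2.1
    have gs := gη₁.add gη₂
    obtain ⟨r1, r2, r3⟩ := order_props g2 gη₂ hη₂.1
    have := gη₂.fin
    have m1 : (γ₁ + γ₂).real univ = (η₁ + η₂).real univ := by
      rw [measureReal_add_apply, measureReal_add_apply, p1, r1]
    have m2 : ∫ x, x ∂(γ₁ + γ₂) = ∫ x, x ∂(η₁ + η₂) := by
      rw [integral_add_measure g1.int g2.int, integral_add_measure gη₁.int gη₂.int, p2, r2]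
    have hsum : η₁ + η₂ ≤ ν := by
      conv_rhs => rw [← Measure.sub_add_cancel_of_le hle]
      rw [add_comm]
      exact add_le_add_left hη₂.2.1 η₁
    refine ⟨order_of g12 gs m1 m2 fun k => ?_, hsum, fun η' ho' hle' => ?_⟩
    · rw [C_add g1 g2, C_add gη₁ gη₂]; linarith [p3 k, r3 k]
    · have g' := gν.mono hle'
      obtain ⟨q1, q2, q3⟩ := order_props g12 g' ho'
      refine order_of gs g' (m1.symm.trans q1) (m2.symm.trans q2) fun k => ?_
      have := shadow_max g2 gν' hη₂ (C (ν - η')) (C_convex (gν.mono Measure.sub_le))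
        (comp η' ho' hle') k
      rw [C_sub gν hle, C_sub gν hle'] at this
      rw [C_add gη₁ gη₂]; linarith
end
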